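/- arXiv:2401.09650 — 7 statements merged into one kernel-verified Lean document; each statement's English description precedes it below -/
import Mathlib

section
/- For every α > 0 there exists a constant κ_α > 0 depending only on α (one may take κ_α = 2(1 + √(8(α + ln 6)/(3 (ln 2)²)))) such that the following holds: for every d ≥ 1, every orthonormal basis V_1, …, V_{d²} of ℂ^{d×d} with respect to the Hilbert–Schmidt inner product, every integer 1 ≤ ℓ ≤ d², and independent uniformly random signs z_1, …, z_ℓ ∈ {−1, 1}, the random matrix W = ∑_{i=1}^ℓ z_i V_i satisfies P(‖W‖_op > κ_α √d) ≤ 2 exp(−α d). -/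
open Matrix BigOperators

noncomputable section

/-- The `ℓ² → ℓ²` operator norm (largest singular value) of a complex matrix. -/
def opNorm {m n : ℕ} (A : Matrix (Fin m) (Fin n) ℂ) : ℝ :=
  ‖LinearMap.toContinuousLinearMap (Matrix.toEuclideanLin A)‖

/-- The sign `±1` associated with a boolean. -/
def sign (b : Bool) : ℝ := if b then 1 else -1

/-- A maximal 1-separated subset of the ball of radius 2 is a 1-net. -/
lemma exists_net (E : Type*) [NormedAddCommGroup E] [NormedSpace ℝ E] [FiniteDimensional ℝ E] :
    ∃ s : Finset E, s.card ≤ 5 ^ Module.finrank ℝ E ∧ (∀ c ∈ s, ‖c‖ ≤ 2) ∧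
      ∀ x : E, ‖x‖ ≤ 2 → ∃ c ∈ s, ‖x - c‖ ≤ 1 := by
  classical
  by_contra hcon
  push Not at hcon
  have key : ∀ k : ℕ, ∃ s : Finset E, s.card = k ∧ (∀ c ∈ s, ‖c‖ ≤ 2) ∧
      (∀ c ∈ s, ∀ d ∈ s, c ≠ d → 1 ≤ ‖c - d‖) := by
    intro k
    induction k with
    | zero => exact ⟨∅, by simp⟩
    | succ k ih =>
      obtain ⟨s, hc, h2, hs⟩ := ih
      obtain ⟨x, hx, hxs⟩ := hcon s (Besicovitch.card_le_of_separated s h2 hs) h2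
      have hxn : x ∉ s := fun h => by
        have := hxs x h
        simp at this
        linarith
      refine ⟨insert x s, by rw [Finset.card_insert_of_notMem hxn, hc], ?_, ?_⟩
      · intro c hc'
        rcases Finset.mem_insert.1 hc' with rfl | h
        · exact hx
        · exact h2 c h
      · intro c hc' e he' hne
        rcases Finset.mem_insert.1 hc' with rfl | h <;> rcases Finset.mem_insert.1 he' with rfl | h'
        · exact absurd rfl hne
        · exact (hxs e h').le
        · rw [norm_sub_rev]; exact (hxs c h).le
        · exact hs c h e h' hne
  obtain ⟨s, hc, h2, hs⟩ := key (5 ^ Module.finrank ℝ E + 1)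
  have := Besicovitch.card_le_of_separated s h2 hs
  omega

/-- Chernoff bound for random signs. -/
lemma chernoff (ℓ : ℕ) (a : Fin ℓ → ℝ) (S t : ℝ) (hS : 0 < S) (ht : 0 ≤ t)
    (ha : ∑ i, a i ^ 2 ≤ S) :
    ((Finset.univ.filter (fun z : Fin ℓ → Bool => t < ∑ i, sign (z i) * a i)).card : ℝ)
      ≤ 2 ^ ℓ * Real.exp (- t ^ 2 / (2 * S)) := by
  classical
  set lam := t / S with hlam
  have hl : 0 ≤ lam := by positivity
  have h1 : ((Finset.univ.filter (fun z : Fin ℓ → Bool => t < ∑ i, sign (z i) * a i)).card : ℝ)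
      * Real.exp (lam * t) ≤ ∑ z : Fin ℓ → Bool, Real.exp (lam * ∑ i, sign (z i) * a i) := by
    rw [← nsmul_eq_mul]
    refine (Finset.card_nsmul_le_sum _ _ _ ?_).trans
      (Finset.sum_le_sum_of_subset_of_nonneg (Finset.filter_subset _ _)
        (fun _ _ _ => (Real.exp_pos _).le))
    intro z hz
    have := (Finset.mem_filter.1 hz).2
    exact Real.exp_le_exp.2 (mul_le_mul_of_nonneg_left this.le hl)
  have h2 : ∑ z : Fin ℓ → Bool, Real.exp (lam * ∑ i, sign (z i) * a i)
      = ∏ i, ∑ b : Bool, Real.exp (lam * (sign b * a i)) := by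
    rw [Finset.prod_univ_sum]
    simp only [Fintype.piFinset_univ]
    refine Finset.sum_congr rfl fun z _ => ?_
    rw [Finset.mul_sum, Real.exp_sum]
  have h3 : ∏ i, ∑ b : Bool, Real.exp (lam * (sign b * a i))
      ≤ ∏ i : Fin ℓ, (2 * Real.exp ((lam * a i) ^ 2 / 2)) := by
    refine Finset.prod_le_prod (fun i _ => Finset.sum_nonneg fun _ _ => (Real.exp_pos _).le) ?_
    intro i _
    have := Real.cosh_le_exp_half_sq (lam * a i)
    rw [Real.cosh_eq] at this
    simp only [Fintype.sum_bool, sign]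
    norm_num
    linarith
  have h4 : ∏ i : Fin ℓ, (2 * Real.exp ((lam * a i) ^ 2 / 2))
      ≤ 2 ^ ℓ * Real.exp (lam ^ 2 * S / 2) := by
    rw [Finset.prod_mul_distrib, ← Real.exp_sum]
    simp only [Finset.prod_const, Finset.card_univ, Fintype.card_fin]
    refine mul_le_mul_of_nonneg_left (Real.exp_le_exp.2 ?_) (by positivity)
    rw [← Finset.sum_div]
    simp only [mul_pow]
    rw [← Finset.mul_sum]
    gcongr
  have h5 := (h1.trans_eq h2).trans (h3.trans h4)
  have h6 : Real.exp (lam ^ 2 * S / 2) = Real.exp (- t ^ 2 / (2 * S)) * Real.exp (lam * t) := by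
    rw [← Real.exp_add]
    congr 1
    rw [hlam]
    field_simp
    ring
  rw [h6, ← mul_assoc] at h5
  exact le_of_mul_le_mul_right h5 (Real.exp_pos _)

/-- The operator norm is controlled by the values on a net. -/
lemma exists_large_pair {d : ℕ} (N : Finset (EuclideanSpace ℂ (Fin d)))
    (hN : ∀ x : EuclideanSpace ℂ (Fin d), ‖x‖ ≤ 2 → ∃ c ∈ N, ‖x - c‖ ≤ 1)
    (W : Matrix (Fin d) (Fin d) ℂ) (t : ℝ) (ht0 : 0 ≤ t) (ht : t < opNorm W) :
    ∃ u ∈ N, ∃ v ∈ N, t < (inner ℂ u (Matrix.toEuclideanLin W v)).re := by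
  by_contra hcon
  push Not at hcon
  set T := LinearMap.toContinuousLinearMap (Matrix.toEuclideanLin W) with hT
  have hTe : ∀ v, T v = Matrix.toEuclideanLin W v := fun v => rfl
  have h1 : ∀ v ∈ N, ‖T v‖ ≤ t := by
    intro v hv
    rcases eq_or_ne (T v) 0 with h0 | h0
    · rw [h0]; simpa using ht0
    have hpos : 0 < ‖T v‖ := norm_pos_iff.2 h0
    set w := T v with hw
    obtain ⟨u, hu, hxu⟩ := hN (((2 / ‖w‖ : ℝ) : ℂ) • w) (by
      rw [norm_smul, Complex.norm_real, Real.norm_of_nonneg (by positivity)]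
      field_simp; rfl)
    have hb := hcon u hu v hv
    rw [← hTe, ← hw] at hb
    have e1 : (inner ℂ ((((2 / ‖w‖ : ℝ) : ℂ)) • w) w).re = 2 * ‖w‖ := by
      rw [inner_smul_left, Complex.conj_ofReal, Complex.re_ofReal_mul]
      have : (inner ℂ w w).re = ‖w‖ ^ 2 := inner_self_eq_norm_sq (𝕜 := ℂ) w
      rw [this]; field_simp
    have e2 : (inner ℂ ((((2 / ‖w‖ : ℝ) : ℂ)) • w - u) w).re ≤ ‖w‖ := by
      refine (Complex.re_le_norm _).trans ((norm_inner_le_norm _ _).trans ?_)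
      nlinarith
    rw [inner_sub_left, Complex.sub_re, e1] at e2
    linarith
  have h2 : ‖T‖ ≤ (t + ‖T‖) / 2 := by
    refine ContinuousLinearMap.opNorm_le_bound _ (by positivity) ?_
    intro x
    rcases eq_or_ne x 0 with h0 | h0
    · simp [h0]
    have hpos : 0 < ‖x‖ := norm_pos_iff.2 h0
    obtain ⟨c, hc, hxc⟩ := hN (((2 / ‖x‖ : ℝ) : ℂ) • x) (by
      rw [norm_smul, Complex.norm_real, Real.norm_of_nonneg (by positivity)]
      field_simp; rfl)
    have e1 : ‖T (((2 / ‖x‖ : ℝ) : ℂ) • x)‖ = 2 / ‖x‖ * ‖T x‖ := by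
      rw [map_smul, norm_smul, Complex.norm_real, Real.norm_of_nonneg (by positivity)]
    have e2 : ‖T (((2 / ‖x‖ : ℝ) : ℂ) • x)‖ ≤ t + ‖T‖ := by
      have e3 : T (((2 / ‖x‖ : ℝ) : ℂ) • x) = T c + T (((2 / ‖x‖ : ℝ) : ℂ) • x - c) := by
        rw [← map_add]; congr 1; abel
      rw [e3]
      refine (norm_add_le _ _).trans (add_le_add (h1 c hc) ((T.le_opNorm _).trans ?_))
      nlinarith [norm_nonneg T]
    rw [e1, div_mul_eq_mul_div, div_le_iff₀ hpos] at e2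
    linarith
  have h3 : opNorm W = ‖T‖ := rfl
  linarith

/-- Bessel's inequality for the bilinear forms of an orthonormal family of matrices. -/
lemma bessel {d ℓ : ℕ} (V : Fin ℓ → Matrix (Fin d) (Fin d) ℂ)
    (hV : ∀ i j, ((V i)ᴴ * V j).trace = if i = j then 1 else 0)
    (u v : EuclideanSpace ℂ (Fin d)) (hu : ‖u‖ ≤ 2) (hv : ‖v‖ ≤ 2) :
    ∑ i, (inner ℂ u (Matrix.toEuclideanLin (V i) v)).re ^ 2 ≤ 16 := by
  classical
  let F : Fin ℓ → EuclideanSpace ℂ (Fin d × Fin d) := fun i => WithLp.toLp 2 fun p => V i p.1 p.2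
  have hF : Orthonormal ℂ F := by
    rw [orthonormal_iff_ite]
    intro i j
    rw [← hV i j]
    simp only [F, PiLp.inner_apply, Matrix.trace, Matrix.diag, Matrix.mul_apply,
      Matrix.conjTranspose_apply, Fintype.sum_prod_type, RCLike.inner_apply]
    rw [Finset.sum_comm]
    refine Finset.sum_congr rfl fun _ _ => Finset.sum_congr rfl fun _ _ => ?_
    simp [mul_comm]
  let x : EuclideanSpace ℂ (Fin d × Fin d) :=
    WithLp.toLp 2 fun p => u p.1 * (starRingEnd ℂ) (v p.2)
  have hx : ‖x‖ ^ 2 = ‖u‖ ^ 2 * ‖v‖ ^ 2 := by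
    rw [EuclideanSpace.norm_sq_eq, EuclideanSpace.norm_sq_eq, EuclideanSpace.norm_sq_eq,
      Finset.sum_mul_sum, Fintype.sum_prod_type]
    refine Finset.sum_congr rfl fun _ _ => Finset.sum_congr rfl fun _ _ => ?_
    simp [x, mul_pow]
  have hin : ∀ i, inner ℂ x (F i) = inner ℂ u (Matrix.toEuclideanLin (V i) v) := by
    intro i
    simp only [F, x, PiLp.inner_apply, Fintype.sum_prod_type, RCLike.inner_apply,
      Matrix.toLpLin_apply, Matrix.mulVec, dotProduct, Finset.sum_mul]
    refine Finset.sum_congr rfl fun _ _ => Finset.sum_congr rfl fun _ _ => ?_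
    simp
    ring
  have hb := hF.sum_inner_products_le (x := x) (s := Finset.univ)
  have hle : ∑ i, (inner ℂ u (Matrix.toEuclideanLin (V i) v)).re ^ 2
      ≤ ∑ i, ‖inner ℂ (F i) x‖ ^ 2 := by
    refine Finset.sum_le_sum fun i _ => ?_
    rw [← hin i, norm_inner_symm, ← sq_abs]
    exact pow_le_pow_left₀ (abs_nonneg _) (Complex.abs_re_le_norm _) 2
  refine hle.trans (hb.trans ?_)
  rw [hx]
  have hu2 : ‖u‖ ^ 2 ≤ 4 := by nlinarith [norm_nonneg u]
  have hv2 : ‖v‖ ^ 2 ≤ 4 := by nlinarith [norm_nonneg v]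
  nlinarith [sq_nonneg ‖u‖, sq_nonneg ‖v‖]

/-- Concentration of the operator norm of a random `±1` combination of an orthonormal
basis of `ℂ^{d×d}`: for every `α > 0` there is `κ_α > 0` such that for every orthonormal
basis `V_1, …, V_{d²}` (w.r.t. the Hilbert–Schmidt inner product), every `1 ≤ ℓ ≤ d²`
and uniformly random independent signs `z`, the matrix `W = ∑_{i<ℓ} z_i V_i` satisfies
`P(‖W‖_op > κ_α √d) ≤ 2 exp(−α d)`. -/
theorem opNorm_concentration :
    ∀ α : ℝ, 0 < α → ∃ κ : ℝ, 0 < κ ∧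
      ∀ d : ℕ, 1 ≤ d →
      ∀ V : Fin (d ^ 2) → Matrix (Fin d) (Fin d) ℂ,
      (∀ i j, ((V i)ᴴ * V j).trace = if i = j then 1 else 0) →
      ∀ ℓ : ℕ, 1 ≤ ℓ → ∀ hℓ : ℓ ≤ d ^ 2,
      ((Finset.univ.filter (fun z : Fin ℓ → Bool =>
          κ * Real.sqrt d <
            opNorm (∑ i : Fin ℓ, (sign (z i) : ℂ) • V (Fin.castLE hℓ i)))).card : ℝ)
          / 2 ^ ℓ
        ≤ 2 * Real.exp (-α * d) := by
  classical
  intro α hα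
  have hlog : 0 < Real.log 5 := Real.log_pos (by norm_num)
  have hK : 0 < 32 * (α + 4 * Real.log 5) := by positivity
  refine ⟨Real.sqrt (32 * (α + 4 * Real.log 5)), Real.sqrt_pos.2 hK, ?_⟩
  intro d hd V hV ℓ _ hℓ
  set κ := Real.sqrt (32 * (α + 4 * Real.log 5)) with hκ
  have hκ2 : κ ^ 2 = 32 * (α + 4 * Real.log 5) := Real.sq_sqrt hK.le
  set t := κ * Real.sqrt d with ht
  have ht0 : 0 ≤ t := by positivity
  have ht2 : t ^ 2 = 32 * (α + 4 * Real.log 5) * d := by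
    rw [ht, mul_pow, hκ2, Real.sq_sqrt (by positivity)]
  obtain ⟨N, hNc, hN2, hN⟩ := exists_net (EuclideanSpace ℂ (Fin d))
  have hfr : Module.finrank ℝ (EuclideanSpace ℂ (Fin d)) = 2 * d := by
    rw [finrank_real_of_complex, finrank_euclideanSpace_fin]
  rw [hfr] at hNc
  let U : Fin ℓ → Matrix (Fin d) (Fin d) ℂ := fun i => V (Fin.castLE hℓ i)
  have hU : ∀ i j, ((U i)ᴴ * U j).trace = if i = j then 1 else 0 := by
    intro i j
    rw [hV]
    simp
  let a : EuclideanSpace ℂ (Fin d) × EuclideanSpace ℂ (Fin d) → Fin ℓ → ℝ :=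
    fun p i => (inner ℂ p.1 (Matrix.toEuclideanLin (U i) p.2)).re
  have hsub : Finset.univ.filter (fun z : Fin ℓ → Bool =>
      t < opNorm (∑ i : Fin ℓ, (sign (z i) : ℂ) • V (Fin.castLE hℓ i)))
      ⊆ (N ×ˢ N).biUnion (fun p => Finset.univ.filter
        (fun z : Fin ℓ → Bool => t < ∑ i, sign (z i) * a p i)) := by
    intro z hz
    obtain ⟨u, hu, v, hv, h⟩ := exists_large_pair N hN _ t ht0 (Finset.mem_filter.1 hz).2
    refine Finset.mem_biUnion.2 ⟨(u, v), Finset.mk_mem_product hu hv,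
      Finset.mem_filter.2 ⟨Finset.mem_univ _, ?_⟩⟩
    refine h.trans_eq ?_
    rw [map_sum, LinearMap.sum_apply, inner_sum, Complex.re_sum]
    refine Finset.sum_congr rfl fun i _ => ?_
    rw [map_smul, LinearMap.smul_apply, inner_smul_right, Complex.re_ofReal_mul]
  have hcard : ((Finset.univ.filter (fun z : Fin ℓ → Bool =>
      t < opNorm (∑ i : Fin ℓ, (sign (z i) : ℂ) • V (Fin.castLE hℓ i)))).card : ℝ)
      ≤ ∑ p ∈ N ×ˢ N, 2 ^ ℓ * Real.exp (- t ^ 2 / (2 * 16)) := by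
    refine (Nat.cast_le.2 ((Finset.card_le_card hsub).trans Finset.card_biUnion_le)).trans ?_
    rw [Nat.cast_sum]
    refine Finset.sum_le_sum fun p hp => ?_
    obtain ⟨h1, h2⟩ := Finset.mem_product.1 hp
    exact chernoff ℓ (a p) 16 t (by norm_num) ht0 (bessel U hU _ _ (hN2 _ h1) (hN2 _ h2))
  rw [Finset.sum_const, Finset.card_product, nsmul_eq_mul] at hcard
  have hNN : ((N.card * N.card : ℕ) : ℝ) ≤ Real.exp (4 * Real.log 5 * d) := by
    have h5 : Real.exp (4 * Real.log 5 * d) = (5 : ℝ) ^ (2 * d) * 5 ^ (2 * d) := by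
      rw [← pow_add, ← Real.rpow_natCast, Real.rpow_def_of_pos (by norm_num)]
      congr 1
      push_cast
      ring
    rw [h5, Nat.cast_mul]
    have : (N.card : ℝ) ≤ 5 ^ (2 * d) := by exact_mod_cast hNc
    gcongr
  rw [div_le_iff₀ (by positivity)]
  refine hcard.trans ((mul_le_mul_of_nonneg_right hNN (by positivity)).trans ?_)
  have hE : Real.exp (4 * Real.log 5 * d) * (2 ^ ℓ * Real.exp (- t ^ 2 / (2 * 16)))
      = Real.exp (-α * d) * 2 ^ ℓ := by
    rw [mul_left_comm, ← Real.exp_add, mul_comm]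
    congr 2
    rw [ht2]
    ring
  rw [hE]
  have : 0 < Real.exp (-α * d) * 2 ^ ℓ := by positivity
  linarith

end
end

section
/- There is a universal constant c' > 0 (one may take c' = 3(ln 2)²/8) such that: for every d ≥ 1, every orthonormal basis V_1, …, V_{d²} of ℂ^{d×d} with respect to the Hilbert–Schmidt inner product, every integer 1 ≤ ℓ ≤ d², independent uniformly random signs z_1, …, z_ℓ ∈ {−1, 1}, every fixed unit vector x ∈ ℂ^d, and every s > 0, the random matrix W = ∑_{i=1}^ℓ z_i V_i satisfies P(‖W x‖₂ ≥ (1 + s)√d) ≤ 2 exp(−c' s² d). -/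
open Matrix BigOperators

noncomputable section

/-- The Euclidean (`ℓ²`) norm of a vector in `ℂ^d`. -/
def euclNorm {d : ℕ} (v : Fin d → ℂ) : ℝ := Real.sqrt (∑ i, ‖v i‖ ^ 2)

lemma mnc_exists_inv {E : Type*} [NormedAddCommGroup E] [InnerProductSpace ℝ E]
    [FiniteDimensional ℝ E] (κ : ℝ) (hκ : 0 < κ) (R : E →ₗ[ℝ] E)
    (h : ∀ y, κ * ‖y‖ ^ 2 ≤ inner ℝ (R y) y) : ∃ S : E →ₗ[ℝ] E, ∀ x, R (S x) = x := by
  have hinj : Function.Injective R := by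
    rw [injective_iff_map_eq_zero]
    intro y hy
    have := h y
    rw [hy, inner_zero_left] at this
    by_contra hne
    have : 0 < ‖y‖ := norm_pos_iff.mpr hne
    have : 0 < κ * ‖y‖ ^ 2 := by positivity
    linarith
  have e := LinearEquiv.ofInjectiveEndo R hinj
  refine ⟨(LinearEquiv.ofInjectiveEndo R hinj).symm.toLinearMap, fun x => ?_⟩
  exact (LinearEquiv.ofInjectiveEndo R hinj).apply_symm_apply x

lemma mnc_cosh (a t : ℝ) :
    Real.exp (a + t) + Real.exp (a - t) ≤ 2 * Real.exp (a + t ^ 2 / 2) := by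
  have := Real.cosh_le_exp_half_sq t
  rw [Real.cosh_eq] at this
  have h2 := Real.exp_pos a
  rw [Real.exp_add, sub_eq_add_neg, Real.exp_add, Real.exp_add]
  nlinarith

lemma mnc_key {E : Type*} [NormedAddCommGroup E] [InnerProductSpace ℝ E]
    [FiniteDimensional ℝ E] (κ : ℝ) (hκ : 0 < κ) : ∀ (n : ℕ) (u : Fin n → E)
    (R S : E →ₗ[ℝ] E), (∀ x y, inner ℝ (R x) y = inner ℝ x (R y)) → (∀ x, R (S x) = x) →
    (∀ y, κ * ‖y‖ ^ 2 + ∑ i, inner ℝ (u i) y ^ 2 ≤ inner ℝ (R y) y) →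
    ∑ z : Fin n → Bool, Real.exp (inner ℝ (∑ i, sign (z i) • u i) (S (∑ i, sign (z i) • u i)) / 2)
      ≤ 2 ^ n * Real.exp ((∑ i, ‖u i‖ ^ 2) / (2 * κ)) := by
  intro n
  induction n with
  | zero => intro u R S _ _ _; simp
  | succ n ih =>
    intro u R S hR hS hb
    -- the downdated form
    let R' : E →ₗ[ℝ] E := R - LinearMap.toSpanSingleton ℝ E (u 0) ∘ₗ (innerₗ E (u 0))
    have hR'a : ∀ y, R' y = R y - inner ℝ (u 0) y • u 0 := fun y => by simp [R']
    have hR' : ∀ x y, inner ℝ (R' x) y = inner ℝ x (R' y) := by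
      intro x y
      rw [hR'a, hR'a, inner_sub_left, inner_sub_right, hR, real_inner_smul_left,
        real_inner_smul_right, real_inner_comm x (u 0)]
      ring
    have hb' : ∀ y, κ * ‖y‖ ^ 2 + ∑ i : Fin n, inner ℝ (u i.succ) y ^ 2 ≤ inner ℝ (R' y) y := by
      intro y
      have := hb y
      rw [Fin.sum_univ_succ] at this
      rw [hR'a, inner_sub_left, real_inner_smul_left]
      nlinarith
    have hco' : ∀ y, κ * ‖y‖ ^ 2 ≤ inner ℝ (R' y) y := fun y =>
      le_trans (le_add_of_nonneg_right (Finset.sum_nonneg fun i _ => sq_nonneg _)) (hb' y)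
    have hco : ∀ y, κ * ‖y‖ ^ 2 ≤ inner ℝ (R y) y := fun y =>
      le_trans (le_add_of_nonneg_right (Finset.sum_nonneg fun i _ => sq_nonneg _)) (hb y)
    obtain ⟨S', hS'⟩ := mnc_exists_inv κ hκ R' hco'
    have IH := ih (fun i => u i.succ) R' S' hR' hS' hb'
    have hSsym : ∀ x y, inner ℝ (S x) y = inner ℝ x (S y) := by
      intro x y
      conv_lhs => rw [← hS y]
      rw [← hR, hS]
    have hS'sym : ∀ x y, inner ℝ (S' x) y = inner ℝ x (S' y) := by
      intro x y
      conv_lhs => rw [← hS' y]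
      rw [← hR', hS']
    -- variational inequality
    have hvar : ∀ w, inner ℝ w (S w) + inner ℝ (u 0) (S w) ^ 2 ≤ inner ℝ w (S' w) := by
      intro w
      have h1 := hco' (S' w - S w)
      have h2 : 0 ≤ κ * ‖S' w - S w‖ ^ 2 := by positivity
      rw [map_sub, hS', inner_sub_left, inner_sub_right, inner_sub_right, hR', hS', hR'a, hS,
        inner_sub_left, real_inner_smul_left] at h1
      have h3 := real_inner_comm w (S w)
      have h4 := hSsym w w
      nlinarith
    have hu0 : inner ℝ (u 0) (S (u 0)) ≤ ‖u 0‖ ^ 2 / κ := by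
      have h1 := hco (S (u 0))
      rw [hS] at h1
      have h2 := real_inner_le_norm (u 0) (S (u 0))
      rw [le_div_iff₀ hκ]
      have h3 : κ * ‖S (u 0)‖ ≤ ‖u 0‖ := by
        rcases (norm_nonneg (S (u 0))).eq_or_lt with h | h
        · rw [← h]; simp
        · by_contra hc
          push Not at hc
          nlinarith
      nlinarith [norm_nonneg (u 0)]
    have hstep : ∀ w : E,
        Real.exp (inner ℝ (u 0 + w) (S (u 0 + w)) / 2)
          + Real.exp (inner ℝ (-u 0 + w) (S (-u 0 + w)) / 2)
        ≤ 2 * Real.exp (‖u 0‖ ^ 2 / (2 * κ)) * Real.exp (inner ℝ w (S' w) / 2) := by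
      intro w
      have hsw : inner ℝ w (S (u 0)) = inner ℝ (u 0) (S w) := by
        rw [← hSsym, real_inner_comm]
      have e1 : inner ℝ (u 0 + w) (S (u 0 + w)) / 2
          = (inner ℝ (u 0) (S (u 0)) + inner ℝ w (S w)) / 2 + inner ℝ (u 0) (S w) := by
        rw [map_add, inner_add_left, inner_add_right, inner_add_right, hsw]; ring
      have e2 : inner ℝ (-u 0 + w) (S (-u 0 + w)) / 2
          = (inner ℝ (u 0) (S (u 0)) + inner ℝ w (S w)) / 2 - inner ℝ (u 0) (S w) := by
        rw [map_add, map_neg, inner_add_left, inner_add_right, inner_add_right, inner_neg_left,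
          inner_neg_right, inner_neg_left, inner_neg_right, hsw]; ring
      rw [e1, e2]
      refine (mnc_cosh _ _).trans ?_
      rw [mul_assoc, ← Real.exp_add]
      have h5 : ‖u 0‖ ^ 2 / (2 * κ) = ‖u 0‖ ^ 2 / κ / 2 := by field_simp
      have := hvar w
      refine mul_le_mul_of_nonneg_left (Real.exp_le_exp.mpr ?_) (by norm_num)
      rw [h5]
      linarith
    rw [← (Fin.consEquiv (fun _ : Fin (n + 1) => Bool)).sum_comp, Fintype.sum_prod_type]
    simp only [Fin.consEquiv_apply, Fin.sum_univ_succ, Fin.cons_zero, Fin.cons_succ,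
      Fintype.sum_bool]
    rw [← Finset.sum_add_distrib]
    simp only [sign, if_true, one_smul, Bool.false_eq_true, if_false, neg_smul] at IH ⊢
    refine (Finset.sum_le_sum fun z _ => hstep _).trans ?_
    rw [← Finset.mul_sum, add_div, Real.exp_add, pow_succ]
    calc _ ≤ 2 * Real.exp (‖u 0‖ ^ 2 / (2 * κ)) * _ :=
          mul_le_mul_of_nonneg_left IH (by positivity)
      _ = _ := by ring

/-- Bessel inequality for the family `V i x`. -/
lemma mnc_bessel {d ℓ : ℕ} (V : Fin ℓ → Matrix (Fin d) (Fin d) ℂ)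
    (hV : ∀ i j, ((V i)ᴴ * V j).trace = if i = j then 1 else 0) (x : Fin d → ℂ)
    (hx : ∑ i, ‖x i‖ ^ 2 = 1) (y : Fin d → ℂ) :
    ∑ i, ‖∑ k, star ((V i).mulVec x k) * y k‖ ^ 2 ≤ ∑ k, ‖y k‖ ^ 2 := by
  let v : Fin ℓ → EuclideanSpace ℂ (Fin d × Fin d) := fun i => WithLp.toLp 2 fun p => V i p.1 p.2
  have hv : Orthonormal ℂ v := by
    rw [orthonormal_iff_ite]
    intro i j
    rw [← hV i j]
    simp only [v, PiLp.inner_apply, Fintype.sum_prod_type, Matrix.trace, Matrix.diag,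
      Matrix.mul_apply, Matrix.conjTranspose_apply, RCLike.inner_apply]
    rw [Finset.sum_comm]
    refine Finset.sum_congr rfl fun a _ => Finset.sum_congr rfl fun b _ => ?_
    simp [mul_comm]
  let q : EuclideanSpace ℂ (Fin d × Fin d) := WithLp.toLp 2 fun p => y p.1 * star (x p.2)
  have h := hv.sum_inner_products_le q (s := Finset.univ)
  have hq : ‖q‖ ^ 2 = ∑ k, ‖y k‖ ^ 2 := by
    rw [EuclideanSpace.norm_sq_eq, Fintype.sum_prod_type]
    simp only [q, norm_mul, norm_star, mul_pow]
    simp only [← Finset.mul_sum, hx, mul_one]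
  rw [hq] at h
  refine le_trans (le_of_eq ?_) h
  refine Finset.sum_congr rfl fun i _ => ?_
  congr 2
  simp only [v, q, PiLp.inner_apply, Fintype.sum_prod_type, RCLike.inner_apply, Matrix.mulVec,
    dotProduct, star_sum, Finset.sum_mul]
  refine Finset.sum_congr rfl fun a _ => Finset.sum_congr rfl fun b _ => ?_
  simp
  ring

lemma mnc_mgf {d ℓ : ℕ} (V : Fin ℓ → Matrix (Fin d) (Fin d) ℂ)
    (hV : ∀ i j, ((V i)ᴴ * V j).trace = if i = j then 1 else 0) (x : Fin d → ℂ)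
    (hx : ∑ i, ‖x i‖ ^ 2 = 1) (t : ℝ) (ht : 0 < t) (ht2 : 2 * t < 1) :
    ∑ z : Fin ℓ → Bool,
      Real.exp (t * euclNorm ((∑ i, (sign (z i) : ℂ) • V i).mulVec x) ^ 2)
      ≤ 2 ^ ℓ * Real.exp (t / (1 - 2 * t) * d) := by
  let u : Fin ℓ → EuclideanSpace ℂ (Fin d) := fun i => WithLp.toLp 2 ((V i).mulVec x)
  have hκ : 0 < 1 / (2 * t) - 1 := by
    rw [sub_pos, lt_div_iff₀ (by positivity)]; linarith
  have hbes : ∀ y : EuclideanSpace ℂ (Fin d), ∑ i, inner ℝ (u i) y ^ 2 ≤ ‖y‖ ^ 2 := by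
    intro y
    have h := mnc_bessel V hV x hx y
    rw [EuclideanSpace.norm_sq_eq]
    refine le_trans (Finset.sum_le_sum fun i _ => ?_) h
    have : inner ℝ (u i) y = (∑ k, star ((V i).mulVec x k) * y k).re := by
      simp only [PiLp.inner_apply, u, Complex.re_sum, Complex.inner]
      exact Finset.sum_congr rfl fun k _ => by rw [mul_comm]; rfl
    rw [this, ← sq_abs]
    gcongr
    exact Complex.abs_re_le_norm _
  have hsum : ∑ i, ‖u i‖ ^ 2 ≤ d := by
    have h : ∀ k : Fin d, ∑ i, ‖u i k‖ ^ 2 ≤ 1 := by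
      intro k
      have h := mnc_bessel V hV x hx (Pi.single k 1)
      simpa [Pi.single_apply, apply_ite, ite_pow, u] using h
    simp only [EuclideanSpace.norm_sq_eq]
    rw [Finset.sum_comm]
    exact (Finset.sum_le_sum fun k _ => h k).trans (by simp)
  have key := mnc_key (1 / (2 * t) - 1) hκ ℓ u ((1 / (2 * t)) • LinearMap.id)
    ((2 * t) • LinearMap.id) (by intro a b; simp [real_inner_smul_left, real_inner_smul_right])
    (by intro a; simp [smul_smul]; field_simp; simp) (by
      intro y
      have := hbes y
      simp only [LinearMap.smul_apply, LinearMap.id_apply, real_inner_smul_left,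
        real_inner_self_eq_norm_sq]
      linarith)
  have hw : ∀ z : Fin ℓ → Bool,
      inner ℝ (∑ i, sign (z i) • u i) (((2 * t) • LinearMap.id : _ →ₗ[ℝ] _) (∑ i, sign (z i) • u i)) / 2
      = t * euclNorm ((∑ i, (sign (z i) : ℂ) • V i).mulVec x) ^ 2 := by
    intro z
    simp only [LinearMap.smul_apply, LinearMap.id_apply, real_inner_smul_right,
        real_inner_self_eq_norm_sq]
    rw [euclNorm, Real.sq_sqrt (by positivity), EuclideanSpace.norm_sq_eq]
    have : ∀ k, (∑ i, sign (z i) • u i) k = (∑ i, (sign (z i) : ℂ) • V i).mulVec x k := by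
      intro k
      rw [Matrix.sum_mulVec]
      simp [u, Matrix.smul_mulVec]
    simp only [this]
    ring
  simp only [hw] at key
  refine key.trans ?_
  gcongr
  have hp : 0 < 1 - 2 * t := by linarith
  have : 2 * (1 / (2 * t) - 1) = (1 - 2 * t) / t := by field_simp
  rw [this, div_div_eq_mul_div, div_mul_eq_mul_div, mul_comm]
  gcongr

/-- Fixed-vector concentration: there is a universal constant `c' > 0` such that for
every orthonormal basis `V_1, …, V_{d²}` of `ℂ^{d×d}` (w.r.t. the Hilbert–Schmidt inner
product), every `1 ≤ ℓ ≤ d²`, uniformly random independent signs `z`, every unit vector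
`x ∈ ℂ^d` and every `s > 0`, the matrix `W = ∑_{i<ℓ} z_i V_i` satisfies
`P(‖W x‖₂ ≥ (1+s)√d) ≤ 2 exp(−c' s² d)`. -/
theorem mulVec_norm_concentration :
    ∃ c' : ℝ, 0 < c' ∧
      ∀ d : ℕ, 1 ≤ d →
      ∀ V : Fin (d ^ 2) → Matrix (Fin d) (Fin d) ℂ,
      (∀ i j, ((V i)ᴴ * V j).trace = if i = j then 1 else 0) →
      ∀ ℓ : ℕ, 1 ≤ ℓ → ∀ hℓ : ℓ ≤ d ^ 2,
      ∀ x : Fin d → ℂ, euclNorm x = 1 →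
      ∀ s : ℝ, 0 < s →
      ((Finset.univ.filter (fun z : Fin ℓ → Bool =>
          (1 + s) * Real.sqrt d ≤
            euclNorm ((∑ i : Fin ℓ, (sign (z i) : ℂ) • V (Fin.castLE hℓ i)).mulVec x))).card : ℝ)
          / 2 ^ ℓ
        ≤ 2 * Real.exp (-c' * s ^ 2 * d) := by
  refine ⟨1 / 4, by norm_num, ?_⟩
  intro d hd V hV ℓ _ hℓ x hx s hs
  have hx' : ∑ i, ‖x i‖ ^ 2 = 1 := by
    rw [euclNorm, Real.sqrt_eq_one] at hx
    exact hx
  have ht : 0 < s / (4 * (1 + s)) := by positivity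
  have ht4 : s / (4 * (1 + s)) < 1 / 4 := by
    rw [div_lt_div_iff₀ (by positivity) (by norm_num)]; linarith
  have hts : s / (4 * (1 + s)) ≤ s / 4 := by
    gcongr; linarith
  have hprod : s / (4 * (1 + s)) * (s * (1 + s)) = s ^ 2 / 4 := by field_simp
  generalize s / (4 * (1 + s)) = t at *
  have h := mnc_mgf (fun i => V (Fin.castLE hℓ i)) (by
    intro i j
    rw [hV]
    simp [Fin.ext_iff]) x hx' t ht (by linarith)
  set F : (Fin ℓ → Bool) → ℝ := fun z =>
    euclNorm ((∑ i : Fin ℓ, (sign (z i) : ℂ) • V (Fin.castLE hℓ i)).mulVec x) with hF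
  have hm : ((Finset.univ.filter (fun z => (1 + s) * Real.sqrt d ≤ F z)).card : ℝ)
      * Real.exp (t * ((1 + s) ^ 2 * d)) ≤ 2 ^ ℓ * Real.exp (t / (1 - 2 * t) * d) := by
    refine le_trans ?_ h
    rw [← nsmul_eq_mul, ← Finset.sum_const]
    refine le_trans (Finset.sum_le_sum fun z hz => ?_)
      (Finset.sum_le_sum_of_subset_of_nonneg (Finset.filter_subset _ _)
        fun _ _ _ => (Real.exp_pos _).le)
    have hz' := (Finset.mem_filter.mp hz).2
    have : (1 + s) ^ 2 * (d : ℝ) = ((1 + s) * Real.sqrt d) ^ 2 := by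
      rw [mul_pow, Real.sq_sqrt (by positivity)]
    rw [this]
    gcongr
  have hdiv : t / (1 - 2 * t) ≤ t + t * s := by
    rw [div_le_iff₀ (by linarith)]
    nlinarith [mul_pos ht hs]
  have hfin : Real.exp (t / (1 - 2 * t) * d)
      ≤ Real.exp (-(1 / 4) * s ^ 2 * d) * Real.exp (t * ((1 + s) ^ 2 * d)) := by
    rw [← Real.exp_add]
    gcongr
    have hd0 : (0 : ℝ) ≤ d := by positivity
    have : t / (1 - 2 * t) ≤ -(1 / 4) * s ^ 2 + t * (1 + s) ^ 2 := by nlinarith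
    nlinarith
  rw [div_le_iff₀ (by positivity)]
  have hA := Real.exp_pos (t * ((1 + s) ^ 2 * d))
  have hB := Real.exp_pos (-(1 / 4) * s ^ 2 * d)
  have h2 : (0 : ℝ) < 2 ^ ℓ := by positivity
  refine le_of_mul_le_mul_right (a := Real.exp (t * ((1 + s) ^ 2 * d))) ?_ hA
  refine hm.trans ?_
  calc _ ≤ 2 ^ ℓ * (Real.exp (-(1 / 4) * s ^ 2 * d) * Real.exp (t * ((1 + s) ^ 2 * d))) := by
        gcongr
    _ ≤ _ := by nlinarith [mul_pos (mul_pos h2 hB) hA]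

end
end

section
/- Let d, k, n ≥ 1 and for each i = 1, …, n let ψ^i_1, …, ψ^i_k be a rank-1 POVM on ℂ^d with Lüders channel H_i; let H̄ = (1/n) ∑_{i=1}^n H_i. For a density matrix ρ let P_ρ be the product distribution on {1,…,k}^n given by P_ρ(x_1, …, x_n) = ∏_{i=1}^n ⟨ψ^i_{x_i}| ρ |ψ^i_{x_i}⟩, and let ρ_mm = I_d/d (so P_{ρ_mm}(x) > 0 for all x). Let σ be a density-matrix-valued random variable on a finite probability space and σ' an independent copy of σ, and set Δ_σ = σ − I_d/d. Then χ²(E_σ[P_σ] ‖ P_{ρ_mm}) ≤ E_{σ,σ'}[exp(n d · Tr[Δ_σ H̄(Δ_{σ'})])] − 1, where Tr[Δ_σ H̄(Δ_{σ'})] is a real number. -/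
open Matrix BigOperators
open scoped ComplexOrder

noncomputable section

/-- The Lüders channel of a rank-1 POVM given by the (not necessarily normalized)
vectors `ψ x`:  `H(X) = ∑ x, |ψ_x⟩⟨ψ_x| X |ψ_x⟩⟨ψ_x| / ⟨ψ_x, ψ_x⟩`. -/
def luders {d k : ℕ} (ψ : Fin k → Fin d → ℂ) (X : Matrix (Fin d) (Fin d) ℂ) :
    Matrix (Fin d) (Fin d) ℂ :=
  ∑ x, (star (ψ x) ⬝ᵥ ψ x)⁻¹ •
    (vecMulVec (ψ x) (star (ψ x)) * X * vecMulVec (ψ x) (star (ψ x)))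

theorem chi_abstract {n k : ℕ} {Ω : Type} [Fintype Ω]
    (w : Ω → ℝ) (hw : ∀ ω, 0 ≤ w ω) (hw1 : ∑ ω, w ω = 1)
    (p : Ω → Fin n → Fin k → ℝ) (q : Fin n → Fin k → ℝ)
    (hp : ∀ ω i x, 0 ≤ p ω i x) (hp1 : ∀ ω i, ∑ x, p ω i x = 1)
    (hq : ∀ i x, 0 < q i x) (hq1 : ∀ i, ∑ x, q i x = 1) :
    ∑ x : Fin n → Fin k, ((∑ ω, w ω * ∏ i, p ω i (x i)) - ∏ i, q i (x i)) ^ 2 / (∏ i, q i (x i))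
      ≤ (∑ ω, ∑ ω', w ω * w ω' *
        Real.exp (∑ i, ∑ x, (p ω i x - q i x) * (p ω' i x - q i x) / q i x)) - 1 := by
  have hQ : ∀ x : Fin n → Fin k, 0 < ∏ i, q i (x i) := fun x => Finset.prod_pos fun i _ => hq i _
  have h1 : ∀ x : Fin n → Fin k,
      ((∑ ω, w ω * ∏ i, p ω i (x i)) - ∏ i, q i (x i)) ^ 2 / (∏ i, q i (x i))
      = (∑ ω, ∑ ω', w ω * w ω' * ∏ i, (p ω i (x i) * p ω' i (x i) / q i (x i)))
        - 2 * (∑ ω, w ω * ∏ i, p ω i (x i)) + ∏ i, q i (x i) := by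
    intro x
    have e : (∑ ω, ∑ ω', w ω * w ω' * ∏ i, (p ω i (x i) * p ω' i (x i) / q i (x i)))
        = (∑ ω, w ω * ∏ i, p ω i (x i)) ^ 2 / ∏ i, q i (x i) := by
      rw [sq, Finset.sum_mul_sum, Finset.sum_div]
      refine Finset.sum_congr rfl fun ω _ => ?_
      rw [Finset.sum_div]
      refine Finset.sum_congr rfl fun ω' _ => ?_
      rw [Finset.prod_div_distrib, Finset.prod_mul_distrib]
      ring
    rw [e]
    have := (hQ x).ne'
    field_simp
    ring
  have hprod : ∀ f : Fin n → Fin k → ℝ, ∑ x : Fin n → Fin k, ∏ i, f i (x i) = ∏ i, ∑ x, f i x := by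
    intro f
    rw [Finset.prod_univ_sum]
    simp
  have h2 : ∑ x : Fin n → Fin k, ∑ ω, w ω * ∏ i, p ω i (x i) = 1 := by
    rw [Finset.sum_comm, ← hw1]
    refine Finset.sum_congr rfl fun ω _ => ?_
    rw [← Finset.mul_sum, hprod]
    simp [hp1]
  have h3 : ∑ x : Fin n → Fin k, ∏ i, q i (x i) = 1 := by
    rw [hprod]; simp [hq1]
  have h4 : ∑ x : Fin n → Fin k,
      (∑ ω, ∑ ω', w ω * w ω' * ∏ i, (p ω i (x i) * p ω' i (x i) / q i (x i)))
      = ∑ ω, ∑ ω', w ω * w ω' * ∏ i, ∑ x, p ω i x * p ω' i x / q i x := by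
    rw [Finset.sum_comm]
    refine Finset.sum_congr rfl fun ω _ => ?_
    rw [Finset.sum_comm]
    refine Finset.sum_congr rfl fun ω' _ => ?_
    rw [← Finset.mul_sum, hprod (fun i y => p ω i y * p ω' i y / q i y)]
  rw [Finset.sum_congr rfl fun x _ => h1 x, Finset.sum_add_distrib, Finset.sum_sub_distrib,
    ← Finset.mul_sum, h2, h3, h4]
  have h5 : (∑ ω, ∑ ω', w ω * w ω' * ∏ i, ∑ x, p ω i x * p ω' i x / q i x)
      ≤ ∑ ω, ∑ ω', w ω * w ω' *
        Real.exp (∑ i, ∑ x, (p ω i x - q i x) * (p ω' i x - q i x) / q i x) := by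
    refine Finset.sum_le_sum fun ω _ => Finset.sum_le_sum fun ω' _ => ?_
    refine mul_le_mul_of_nonneg_left ?_ (mul_nonneg (hw _) (hw _))
    rw [Real.exp_sum]
    refine Finset.prod_le_prod (fun i _ => Finset.sum_nonneg fun x _ =>
      div_nonneg (mul_nonneg (hp _ _ _) (hp _ _ _)) (hq _ _).le) fun i _ => ?_
    have e : ∑ x, p ω i x * p ω' i x / q i x
        = (∑ x, (p ω i x - q i x) * (p ω' i x - q i x) / q i x) + 1 := by
      have : ∀ x, (p ω i x - q i x) * (p ω' i x - q i x) / q i x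
          = p ω i x * p ω' i x / q i x - p ω i x - p ω' i x + q i x := by
        intro x
        have := (hq i x).ne'
        field_simp
        ring
      rw [Finset.sum_congr rfl fun x _ => this x, Finset.sum_add_distrib,
        Finset.sum_sub_distrib, Finset.sum_sub_distrib, hp1, hp1, hq1]
      ring
    rw [e]
    exact Real.add_one_le_exp _
  linarith

theorem sum_quad {d k : ℕ} (ψ : Fin k → Fin d → ℂ)
    (h : ∑ x, vecMulVec (ψ x) (star (ψ x)) = (1 : Matrix (Fin d) (Fin d) ℂ))
    (A : Matrix (Fin d) (Fin d) ℂ) :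
    ∑ x, star (ψ x) ⬝ᵥ A.mulVec (ψ x) = A.trace := by
  have : A.trace = (A * ∑ x, vecMulVec (ψ x) (star (ψ x))).trace := by rw [h, mul_one]
  rw [this, Finset.mul_sum, trace_sum]
  refine Finset.sum_congr rfl fun x _ => ?_
  rw [mul_vecMulVec, trace_vecMulVec, dotProduct_comm]

theorem trace_luders {d k : ℕ} (ψ : Fin k → Fin d → ℂ) (A B : Matrix (Fin d) (Fin d) ℂ) :
    (A * luders ψ B).trace = ∑ x, (star (ψ x) ⬝ᵥ ψ x)⁻¹ *
      ((star (ψ x) ⬝ᵥ A.mulVec (ψ x)) * (star (ψ x) ⬝ᵥ B.mulVec (ψ x))) := by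
  unfold luders
  rw [Finset.mul_sum, trace_sum]
  refine Finset.sum_congr rfl fun x _ => ?_
  rw [Matrix.mul_smul, trace_smul, smul_eq_mul, vecMulVec_mul, vecMulVec_mul_vecMulVec,
    vecMulVec_smul, Matrix.mul_smul, trace_smul, mul_vecMulVec, trace_vecMulVec, smul_eq_mul,
    dotProduct_comm (A.mulVec _), ← dotProduct_mulVec]
  ring

theorem herm_quad_im {d : ℕ} (v : Fin d → ℂ) {A : Matrix (Fin d) (Fin d) ℂ}
    (hA : A.IsHermitian) :
    star v ⬝ᵥ A.mulVec v = (((star v ⬝ᵥ A.mulVec v).re : ℝ) : ℂ) := by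
  have := hA.im_star_dotProduct_mulVec_self v
  apply Complex.ext
  · simp
  · simpa using this

/-- Decoupled chi-square bound: for `n` rank-1 POVMs with average Lüders channel `H̄`
and a random density matrix `σ` (on a finite probability space, with independent copy
`σ'`), the chi-square divergence between the mixture of outcome distributions
`E_σ[P_σ]` and the maximally mixed outcome distribution `P_mm` is at most
`E_{σ,σ'}[exp(n d Tr[Δ_σ H̄(Δ_{σ'})])] − 1`, where `Δ_σ = σ − I/d`. -/
theorem chi_square_le_luders_term
    {d k n : ℕ} (hd : 1 ≤ d) (hk : 1 ≤ k) (hn : 1 ≤ n)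
    (ψ : Fin n → Fin k → Fin d → ℂ)
    (hne : ∀ i x, ψ i x ≠ 0)
    (hpovm : ∀ i, ∑ x, vecMulVec (ψ i x) (star (ψ i x)) = (1 : Matrix (Fin d) (Fin d) ℂ))
    {Ω : Type} [Fintype Ω] [Nonempty Ω]
    (w : Ω → ℝ) (hw : ∀ ω, 0 ≤ w ω) (hw1 : ∑ ω, w ω = 1)
    (σ : Ω → Matrix (Fin d) (Fin d) ℂ)
    (hσpsd : ∀ ω, (σ ω).PosSemidef) (hσtr : ∀ ω, (σ ω).trace = 1) :
    let Hbar : Matrix (Fin d) (Fin d) ℂ → Matrix (Fin d) (Fin d) ℂ := fun X =>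
      (n : ℂ)⁻¹ • ∑ i, luders (ψ i) X
    let Δ : Ω → Matrix (Fin d) (Fin d) ℂ := fun ω => σ ω - (d : ℂ)⁻¹ • 1
    ∑ x : Fin n → Fin k,
      ((∑ ω, w ω * ∏ i, (star (ψ i (x i)) ⬝ᵥ (σ ω).mulVec (ψ i (x i))).re)
          - ∏ i, (star (ψ i (x i)) ⬝ᵥ ψ i (x i)).re / d) ^ 2
        / (∏ i, (star (ψ i (x i)) ⬝ᵥ ψ i (x i)).re / d)
      ≤ (∑ ω, ∑ ω', w ω * w ω' *
          Real.exp ((n : ℝ) * d * ((Δ ω) * Hbar (Δ ω')).trace.re)) - 1 := by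
  intro Hbar Δ
  have hd0 : (0 : ℝ) < d := by exact_mod_cast hd
  have hdc : (d : ℂ) ≠ 0 := by exact_mod_cast hd0.ne'
  have hnc : (n : ℂ) ≠ 0 := by exact_mod_cast (by omega : n ≠ 0)
  have hpos : ∀ i x, 0 < (star (ψ i x) ⬝ᵥ ψ i x).re := fun i x =>
    (Complex.pos_iff.1 (dotProduct_star_self_pos_iff.2 (hne i x))).1
  have hreal : ∀ i x, star (ψ i x) ⬝ᵥ ψ i x = (((star (ψ i x) ⬝ᵥ ψ i x).re : ℝ) : ℂ) := by
    intro i x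
    simpa using herm_quad_im (ψ i x) (Matrix.isHermitian_one (n := Fin d) (α := ℂ))
  have key := chi_abstract w hw hw1
    (fun ω i x => (star (ψ i x) ⬝ᵥ (σ ω).mulVec (ψ i x)).re)
    (fun i x => (star (ψ i x) ⬝ᵥ ψ i x).re / d)
    (fun ω i x => (hσpsd ω).re_dotProduct_nonneg (ψ i x))
    (fun ω i => by
      rw [← Complex.re_sum, sum_quad _ (hpovm i), hσtr]; simp)
    (fun i x => div_pos (hpos i x) hd0)
    (fun i => by
      have := sum_quad _ (hpovm i) 1
      simp only [one_mulVec] at this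
      rw [← Finset.sum_div, ← Complex.re_sum, this]
      simp [hd0.ne'])
  refine key.trans (le_of_eq ?_)
  congr 1
  refine Finset.sum_congr rfl fun ω _ => Finset.sum_congr rfl fun ω' _ => ?_
  congr 2
  have hΔ : ∀ ω i x, star (ψ i x) ⬝ᵥ (Δ ω).mulVec (ψ i x)
      = (((star (ψ i x) ⬝ᵥ (σ ω).mulVec (ψ i x)).re
          - (star (ψ i x) ⬝ᵥ ψ i x).re / d : ℝ) : ℂ) := by
    intro ω i x
    simp only [Δ, sub_mulVec, smul_mulVec, one_mulVec, dotProduct_sub, dotProduct_smul,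
      smul_eq_mul]
    rw [herm_quad_im (ψ i x) (hσpsd ω).1, hreal i x]
    push_cast
    simp only [Complex.ofReal_re]
    ring
  have hc : ((n : ℂ) * d * (Δ ω * Hbar (Δ ω')).trace)
      = ((∑ i, ∑ x, ((star (ψ i x) ⬝ᵥ (σ ω).mulVec (ψ i x)).re - (star (ψ i x) ⬝ᵥ ψ i x).re / d) *
          ((star (ψ i x) ⬝ᵥ (σ ω').mulVec (ψ i x)).re - (star (ψ i x) ⬝ᵥ ψ i x).re / d) /
          ((star (ψ i x) ⬝ᵥ ψ i x).re / d) : ℝ) : ℂ) := by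
    simp only [Hbar]
    rw [Matrix.mul_smul, trace_smul, Finset.mul_sum, trace_sum, smul_eq_mul]
    have e : ∀ S : ℂ, (n : ℂ) * d * ((n : ℂ)⁻¹ * S) = d * S := by
      intro S
      field_simp
    rw [e, Finset.mul_sum, Complex.ofReal_sum]
    refine Finset.sum_congr rfl fun i _ => ?_
    rw [trace_luders, Finset.mul_sum, Complex.ofReal_sum]
    refine Finset.sum_congr rfl fun x _ => ?_
    rw [hΔ, hΔ, hreal i x]
    simp only [Complex.ofReal_re]
    have := hpos i x
    have h0 : (((star (ψ i x) ⬝ᵥ ψ i x).re : ℝ) : ℂ) ≠ 0 := by exact_mod_cast this.ne'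
    push_cast
    field_simp
  have := congrArg Complex.re hc
  rw [Complex.ofReal_re] at this
  rw [← this, ← Complex.ofReal_natCast, ← Complex.ofReal_natCast, ← Complex.ofReal_mul,
    Complex.re_ofReal_mul]

end
end

section
/- Let k, n ≥ 1, let p^(1), …, p^(n) be probability distributions on {1,…,k} with p^(i)(x) > 0 for all i and x, and let θ be a random variable taking values in a finite set Θ such that for each θ ∈ Θ and each i, q_θ^(i) is a probability distribution on {1,…,k}. Let P = p^(1) ⊗ ⋯ ⊗ p^(n) and Q_θ = q_θ^(1) ⊗ ⋯ ⊗ q_θ^(n) be the corresponding product distributions on {1,…,k}^n. Then χ²(E_θ[Q_θ] ‖ P) = E_{θ,θ'}[∏_{i=1}^n (1 + H_i(θ, θ'))] − 1, where θ' is an independent copy of θ, H_i(θ, θ') = ∑_{x=1}^k p^(i)(x) δ_θ^(i)(x) δ_{θ'}^(i)(x), and δ_θ^(i)(x) = (q_θ^(i)(x) − p^(i)(x))/p^(i)(x). -/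
open BigOperators

noncomputable section

/-- Pollard's decoupled chi-square identity: for a fixed product distribution
`P = p⁽¹⁾ ⊗ ⋯ ⊗ p⁽ⁿ⁾` on `{1,…,k}ⁿ` with positive marginals and a random product
distribution `Q_θ = q_θ⁽¹⁾ ⊗ ⋯ ⊗ q_θ⁽ⁿ⁾` with `θ` ranging over a finite probability
space, one has `χ²(E_θ[Q_θ] ‖ P) = E_{θ,θ'}[∏ᵢ (1 + Hᵢ(θ,θ'))] − 1` where
`Hᵢ(θ,θ') = ∑ₓ p⁽ⁱ⁾(x) δ_θ⁽ⁱ⁾(x) δ_{θ'}⁽ⁱ⁾(x)` and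
`δ_θ⁽ⁱ⁾(x) = (q_θ⁽ⁱ⁾(x) − p⁽ⁱ⁾(x))/p⁽ⁱ⁾(x)`. -/
theorem chi_square_decoupling
    {k n : ℕ} (hk : 1 ≤ k) (hn : 1 ≤ n)
    (p : Fin n → Fin k → ℝ) (hp : ∀ i x, 0 < p i x) (hp1 : ∀ i, ∑ x, p i x = 1)
    {Θ : Type} [Fintype Θ] [Nonempty Θ]
    (w : Θ → ℝ) (hw : ∀ θ, 0 ≤ w θ) (hw1 : ∑ θ, w θ = 1)
    (q : Θ → Fin n → Fin k → ℝ)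
    (hq : ∀ θ i x, 0 ≤ q θ i x) (hq1 : ∀ θ i, ∑ x, q θ i x = 1) :
    ∑ x : Fin n → Fin k,
      ((∑ θ, w θ * ∏ i, q θ i (x i)) - ∏ i, p i (x i)) ^ 2 / ∏ i, p i (x i)
    = (∑ θ, ∑ θ', w θ * w θ' *
        ∏ i, (1 + ∑ x, p i x * ((q θ i x - p i x) / p i x)
            * ((q θ' i x - p i x) / p i x))) - 1 := by
  classical
  have key : ∀ f : Fin n → Fin k → ℝ,
      ∑ x : Fin n → Fin k, ∏ i, f i (x i) = ∏ i, ∑ y, f i y := by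
    intro f
    rw [Finset.prod_univ_sum, Fintype.piFinset_univ]
  have h1 : ∀ θ θ' i, 1 + ∑ x, p i x * ((q θ i x - p i x) / p i x)
      * ((q θ' i x - p i x) / p i x) = ∑ x, q θ i x * q θ' i x / p i x := by
    intro θ θ' i
    have : ∀ x, p i x * ((q θ i x - p i x) / p i x) * ((q θ' i x - p i x) / p i x)
        = q θ i x * q θ' i x / p i x - q θ i x - q θ' i x + p i x := by
      intro x
      have := (hp i x).ne'
      field_simp
      ring
    simp only [this, Finset.sum_add_distrib, Finset.sum_sub_distrib, hq1, hp1]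
    ring
  have hP : ∑ x : Fin n → Fin k, ∏ i, p i (x i) = 1 := by
    rw [key]; simp [hp1]
  have hQ : ∑ x : Fin n → Fin k, ∑ θ, w θ * ∏ i, q θ i (x i) = 1 := by
    rw [Finset.sum_comm]
    simp only [← Finset.mul_sum]
    have : ∀ θ, ∑ x : Fin n → Fin k, ∏ i, q θ i (x i) = 1 := by
      intro θ
      rw [key]; simp [hq1]
    simp [this, hw1]
  have h2 : ∀ x : Fin n → Fin k,
      ((∑ θ, w θ * ∏ i, q θ i (x i)) - ∏ i, p i (x i)) ^ 2 / ∏ i, p i (x i)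
      = (∑ θ, ∑ θ', w θ * w θ' * ∏ i, (q θ i (x i) * q θ' i (x i) / p i (x i)))
        - 2 * (∑ θ, w θ * ∏ i, q θ i (x i)) + ∏ i, p i (x i) := by
    intro x
    have hne : ∏ i, p i (x i) ≠ 0 := (Finset.prod_pos fun i _ => hp i (x i)).ne'
    have h3 : (∑ θ, ∑ θ', w θ * w θ' * ∏ i, (q θ i (x i) * q θ' i (x i) / p i (x i)))
        = (∑ θ, w θ * ∏ i, q θ i (x i)) ^ 2 / ∏ i, p i (x i) := by
      rw [sq, Finset.sum_mul_sum, Finset.sum_div]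
      refine Finset.sum_congr rfl fun θ _ => ?_
      rw [Finset.sum_div]
      refine Finset.sum_congr rfl fun θ' _ => ?_
      rw [Finset.prod_div_distrib, Finset.prod_mul_distrib]
      ring
    rw [h3]
    field_simp
    ring
  simp only [h1, h2, Finset.sum_add_distrib, Finset.sum_sub_distrib, ← Finset.mul_sum, hP, hQ]
  have h4 : ∑ x : Fin n → Fin k, ∑ θ, ∑ θ', w θ * w θ' *
        ∏ i, (q θ i (x i) * q θ' i (x i) / p i (x i))
      = ∑ θ, ∑ θ', w θ * w θ' * ∏ i, ∑ x, q θ i x * q θ' i x / p i x := by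
    rw [Finset.sum_comm]
    refine Finset.sum_congr rfl fun θ _ => ?_
    rw [Finset.sum_comm]
    refine Finset.sum_congr rfl fun θ' _ => ?_
    rw [← Finset.mul_sum, key (fun i y => q θ i y * q θ' i y / p i y)]
  rw [h4]
  ring

end
end

section
/- There exists a universal constant c with 0 < c ≤ 10√2 such that the following holds. Let d ≥ 16, let ℓ be an integer with d²/2 ≤ ℓ ≤ d²−1, let V_1, …, V_{d²} be an orthonormal basis (with respect to the Hilbert–Schmidt inner product) of the real vector space of Hermitian d×d complex matrices with V_{d²} = I_d/√d, and let 0 < ε < 1/c². For z ∈ {−1,1}^ℓ set Δ_z = (c ε/√(d ℓ)) ∑_{i=1}^ℓ z_i V_i and Δ̄_z = Δ_z · min{1, 1/(d ‖Δ_z‖_op)}, and let z, z' be independent and uniform on {−1,1}^ℓ. Let H̄ = (1/n) ∑_{i=1}^n H_i be the average of the Lüders channels of n rank-1 POVMs on ℂ^d. Then for every n < d²/(6 c² ε²): E_{z,z'}[exp(n d · Tr[Δ̄_{z'} H̄(Δ̄_z)])] − 1 ≤ exp((c² n² ε⁴/ℓ²) · ∑_{i=1}^ℓ ∑_{j=1}^ℓ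 (Tr[V_i H̄(V_j)])²) − 1 + 4 exp(−d). -/
open Matrix BigOperators
open scoped ComplexOrder

noncomputable section

/-- Rademacher quadratic chaos bound for symmetric `0 ≤ M ≤ θ < 1`. -/
theorem quad_chaos (θ : ℝ) (h0 : 0 ≤ θ) (h1 : θ < 1) : ∀ (n : ℕ) (M : Fin n → Fin n → ℝ),
    (∀ i j, M i j = M j i) →
    (∀ x : Fin n → ℝ, 0 ≤ ∑ i, ∑ j, x i * x j * M i j) →
    (∀ x : Fin n → ℝ, ∑ i, ∑ j, x i * x j * M i j ≤ θ * ∑ i, x i ^ 2) →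
    ∑ z : Fin n → Bool, Real.exp (1 / 2 * ∑ i, ∑ j, sign (z i) * sign (z j) * M i j)
      ≤ 2 ^ n * Real.exp (1 / 2 * (∑ i, M i i) / (1 - θ)) := by
  intro n
  induction n with
  | zero => intro M _ _ _; simp
  | succ n ih =>
    intro M hs hp hb
    have key : ∀ (t : ℝ) (w : Fin n → ℝ),
        ∑ i, ∑ j, (Fin.cons t w : Fin (n+1) → ℝ) i * (Fin.cons t w : Fin (n+1) → ℝ) j * M i j
        = t ^ 2 * M 0 0 + 2 * t * (∑ i, M 0 i.succ * w i)
          + ∑ i, ∑ j, w i * w j * M i.succ j.succ := by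
      intro t w
      simp only [Fin.sum_univ_succ, Fin.cons_zero, Fin.cons_succ, Finset.sum_add_distrib]
      have e1 : ∑ i, t * w i * M 0 i.succ = t * ∑ i, M 0 i.succ * w i := by
        rw [Finset.mul_sum]; exact Finset.sum_congr rfl fun i _ => by ring
      have e2 : ∑ i, w i * t * M i.succ 0 = t * ∑ i, M 0 i.succ * w i := by
        rw [Finset.mul_sum]; exact Finset.sum_congr rfl fun i _ => by rw [hs i.succ 0]; ring
      rw [e1, e2]; ring
    have kp : ∀ (t : ℝ) (w : Fin n → ℝ), 0 ≤ t ^ 2 * M 0 0 + 2 * t * (∑ i, M 0 i.succ * w i)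
          + ∑ i, ∑ j, w i * w j * M i.succ j.succ := fun t w => by
      rw [← key]; exact hp _
    have kb : ∀ (t : ℝ) (w : Fin n → ℝ), t ^ 2 * M 0 0 + 2 * t * (∑ i, M 0 i.succ * w i)
          + ∑ i, ∑ j, w i * w j * M i.succ j.succ ≤ θ * (t ^ 2 + ∑ i, w i ^ 2) := fun t w => by
      rw [← key]
      refine (hb _).trans (le_of_eq ?_)
      simp [Fin.sum_univ_succ]
    have hM0 : 0 ≤ M 0 0 := by simpa using kp 1 0
    set m : Fin n → ℝ := fun i => M 0 i.succ with hm
    have hsq : ∀ w : Fin n → ℝ, ∑ i, ∑ j, w i * w j * (m i * m j) = (∑ i, m i * w i) ^ 2 := by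
      intro w
      rw [sq, Finset.sum_mul_sum]
      exact Finset.sum_congr rfl fun i _ => Finset.sum_congr rfl fun j _ => by ring
    have hsplit : ∀ w : Fin n → ℝ, ∑ i, ∑ j, w i * w j * (M i.succ j.succ + m i * m j)
        = ∑ i, ∑ j, w i * w j * M i.succ j.succ + (∑ i, m i * w i) ^ 2 := by
      intro w
      rw [← hsq w]
      simp only [mul_add, Finset.sum_add_distrib]
    have hmm : ∑ i, m i ^ 2 ≤ θ * M 0 0 := by
      have a := kp (-θ) m
      have b := kb 0 m
      have e : ∑ i, M 0 i.succ * m i = ∑ i, m i ^ 2 := Finset.sum_congr rfl fun i _ => by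
        simp only [hm]; ring
      rw [e] at a
      rcases h0.eq_or_lt with h | h
      · subst h
        have a2 := kb (-1) m
        rw [e] at a2
        have a3 := kp 1 m
        rw [e] at a3
        have a4 := kp 0 m
        have a5 := kb 1 m
        rw [e] at a5
        nlinarith
      · have : 0 ≤ θ * (θ * M 0 0 - ∑ i, m i ^ 2) := by nlinarith
        have := nonneg_of_mul_nonneg_right this h
        linarith
    have IH := ih (fun i j => M i.succ j.succ + m i * m j)
      (fun i j => by rw [hs i.succ j.succ]; ring)
      (fun w => by
        rw [hsplit]
        have := kp 0 w
        nlinarith [sq_nonneg (∑ i, m i * w i)])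
      (fun w => by
        rw [hsplit]
        have := kb (∑ i, m i * w i) w
        simp only [hm] at this ⊢
        nlinarith [sq_nonneg (∑ i, M 0 i.succ * w i),
          mul_nonneg (sq_nonneg (∑ i, M 0 i.succ * w i)) hM0])
    have step : ∑ z : Fin (n+1) → Bool,
        Real.exp (1 / 2 * ∑ i, ∑ j, sign (z i) * sign (z j) * M i j)
        ≤ ∑ w : Fin n → Bool, 2 * Real.exp (1/2 * M 0 0) *
          Real.exp (1 / 2 * ∑ i, ∑ j, sign (w i) * sign (w j) *
            (M i.succ j.succ + m i * m j)) := by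
      rw [← (Fin.consEquiv (fun _ : Fin (n+1) => Bool)).sum_comp, Fintype.sum_prod_type,
        Finset.sum_comm]
      refine Finset.sum_le_sum fun w _ => ?_
      have hk : ∀ b : Bool, ∑ i, ∑ j,
          sign ((Fin.cons b w : Fin (n+1) → Bool) i) * sign ((Fin.cons b w : Fin (n+1) → Bool) j)
            * M i j = (sign b) ^ 2 * M 0 0 + 2 * sign b * (∑ i, m i * sign (w i))
          + ∑ i, ∑ j, sign (w i) * sign (w j) * M i.succ j.succ := by
        intro b
        rw [← key (sign b) (fun i => sign (w i))]
        have : ∀ i, sign ((Fin.cons b w : Fin (n+1) → Bool) i)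
          = (Fin.cons (sign b) (fun i => sign (w i)) : Fin (n+1) → ℝ) i := by
          intro i; refine Fin.cases ?_ (fun i => ?_) i <;> simp
        simp only [this]
      rw [hsplit (fun i => sign (w i)), Fintype.sum_bool]
      simp only [Fin.consEquiv, Equiv.coe_fn_mk, hk]
      simp only [sign, if_true, Bool.false_eq_true, if_false]
      set S := ∑ i, m i * (if w i = true then (1:ℝ) else -1)
      set Q := ∑ i, ∑ j, (if w i = true then (1:ℝ) else -1) * (if w j = true then (1:ℝ) else -1)
        * M i.succ j.succ
      have hc := Real.cosh_le_exp_half_sq S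
      rw [Real.cosh_eq] at hc
      have e1 : (1/2 * (1 ^ 2 * M 0 0 + 2 * 1 * S + Q) : ℝ) = 1/2 * M 0 0 + 1/2*Q + S := by ring
      have e2 : (1/2 * ((-1) ^ 2 * M 0 0 + 2 * (-1) * S + Q) : ℝ)
        = 1/2 * M 0 0 + 1/2*Q + -S := by ring
      have e3 : (1/2 * (Q + S ^ 2) : ℝ) = 1/2 * Q + S^2/2 := by ring
      rw [e1, e2, e3]
      simp only [Real.exp_add]
      have hpos := mul_pos (Real.exp_pos (1/2 * M 0 0)) (Real.exp_pos (1/2 * Q))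
      nlinarith [mul_le_mul_of_nonneg_left hc hpos.le]
    refine step.trans ?_
    rw [← Finset.mul_sum]
    refine (mul_le_mul_of_nonneg_left IH (by positivity)).trans ?_
    have h1' : 0 < 1 - θ := by linarith
    have e : 2 * Real.exp (1/2 * M 0 0) * (2 ^ n * Real.exp (1 / 2 *
        (∑ i : Fin n, (M i.succ i.succ + m i * m i)) / (1 - θ)))
        = 2 ^ (n+1) * Real.exp (1/2 * M 0 0 + 1 / 2 *
        (∑ i : Fin n, (M i.succ i.succ + m i * m i)) / (1 - θ)) := by
      rw [Real.exp_add]; ring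
    rw [e]
    refine mul_le_mul_of_nonneg_left (Real.exp_le_exp.mpr ?_) (by positivity)
    rw [Fin.sum_univ_succ, Finset.sum_add_distrib]
    simp only [← sq]
    rw [← sub_nonneg]
    have : 1 / 2 * (M 0 0 + ∑ i : Fin n, M i.succ i.succ) / (1 - θ) - (1 / 2 * M 0 0 +
      1 / 2 * (∑ i : Fin n, M i.succ i.succ + ∑ i, m i ^ 2) / (1 - θ))
      = 1/2 * (θ * M 0 0 - ∑ i, m i ^ 2) / (1 - θ) := by
      field_simp; ring
    rw [this]
    have : 0 ≤ θ * M 0 0 - ∑ i, m i ^ 2 := by linarith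
    positivity

/-- Decoupled Rademacher chaos bound. -/
theorem bilin_chaos (l : ℝ) (hl0 : 0 ≤ l) (hl : l ≤ 1 / 3) (n : ℕ) (A : Fin n → Fin n → ℝ)
    (hA : ∀ x : Fin n → ℝ, ∑ i, (∑ j, A i j * x j) ^ 2 ≤ ∑ i, x i ^ 2) :
    ∑ z : Fin n → Bool, ∑ z' : Fin n → Bool,
      Real.exp (l * ∑ i, ∑ j, sign (z' i) * sign (z j) * A i j)
      ≤ 2 ^ n * 2 ^ n * Real.exp (l ^ 2 * ∑ i, ∑ j, A i j ^ 2) := by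
  have inner : ∀ y : Fin n → ℝ, ∑ z' : Fin n → Bool, Real.exp (∑ i, sign (z' i) * y i)
      ≤ 2 ^ n * Real.exp (1 / 2 * ∑ i, y i ^ 2) := by
    intro y
    have : ∀ z' : Fin n → Bool, Real.exp (∑ i, sign (z' i) * y i)
      = ∏ i, Real.exp (sign (z' i) * y i) := fun z' => Real.exp_sum _ _
    simp only [this]
    rw [← Fintype.prod_sum (fun i b => Real.exp (sign b * y i)), Finset.mul_sum, Real.exp_sum]
    have h2 : (2:ℝ) ^ n = ∏ _i : Fin n, (2:ℝ) := by simp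
    rw [h2, ← Finset.prod_mul_distrib]
    refine Finset.prod_le_prod (fun i _ => Finset.sum_nonneg fun _ _ => (Real.exp_pos _).le)
      fun i _ => ?_
    have hc := Real.cosh_le_exp_half_sq (y i)
    rw [Real.cosh_eq] at hc
    rw [Fintype.sum_bool]
    simp only [sign, if_true, Bool.false_eq_true, if_false, one_mul, neg_one_mul]
    have : (1/2 * y i ^ 2 : ℝ) = y i ^ 2 / 2 := by ring
    rw [this]; linarith
  let M : Fin n → Fin n → ℝ := fun i j => l ^ 2 * ∑ k, A k i * A k j
  have hM : ∀ x : Fin n → ℝ, ∑ i, ∑ j, x i * x j * M i j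
      = l ^ 2 * ∑ k, (∑ j, A k j * x j) ^ 2 := by
    intro x
    have : ∀ k, (∑ j, A k j * x j) ^ 2 = ∑ i, ∑ j, (A k i * x i) * (A k j * x j) := fun k => by
      rw [sq, Finset.sum_mul_sum]
    simp only [this, M, Finset.mul_sum]
    rw [Finset.sum_comm' (t' := Finset.univ) (s' := fun _ => Finset.univ) (by simp)]
    rw [Finset.sum_comm]
    conv_rhs => rw [Finset.sum_comm]
    refine Finset.sum_congr rfl fun i _ => ?_
    conv_rhs => rw [Finset.sum_comm]
    exact Finset.sum_congr rfl fun j _ => Finset.sum_congr rfl fun k _ => by ring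
  have hl2 : l ^ 2 ≤ 1 / 9 := by nlinarith
  have hq := quad_chaos (l ^ 2) (sq_nonneg l) (by linarith) n M
    (fun i j => by simp only [M]; congr 1; exact Finset.sum_congr rfl fun k _ => by ring)
    (fun x => by rw [hM]; positivity)
    (fun x => by rw [hM]; exact mul_le_mul_of_nonneg_left (hA x) (sq_nonneg l))
  have hstep : ∀ z : Fin n → Bool, ∑ z' : Fin n → Bool,
      Real.exp (l * ∑ i, ∑ j, sign (z' i) * sign (z j) * A i j)
      ≤ 2 ^ n * Real.exp (1 / 2 * ∑ i, ∑ j, sign (z i) * sign (z j) * M i j) := by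
    intro z
    rw [hM (fun i => sign (z i))]
    refine le_trans (le_of_eq ?_) ((inner (fun i => l * ∑ j, A i j * sign (z j))).trans
      (le_of_eq ?_))
    · refine Finset.sum_congr rfl fun z' _ => ?_
      congr 1
      rw [Finset.mul_sum]
      refine Finset.sum_congr rfl fun i _ => ?_
      simp only [Finset.mul_sum]
      exact Finset.sum_congr rfl fun j _ => by ring
    · simp only [mul_pow]
      rw [← Finset.mul_sum]
  refine (Finset.sum_le_sum fun z _ => hstep z).trans ?_
  rw [← Finset.mul_sum, mul_assoc]
  refine mul_le_mul_of_nonneg_left (hq.trans ?_) (by positivity)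
  refine mul_le_mul_of_nonneg_left (Real.exp_le_exp.mpr ?_) (by positivity)
  have htr : ∑ i, M i i = l ^ 2 * ∑ i, ∑ j, A i j ^ 2 := by
    simp only [M, ← Finset.mul_sum, ← sq]
    rw [Finset.sum_comm]
  rw [htr, div_le_iff₀ (by linarith)]
  have : 0 ≤ l ^ 2 * ∑ i, ∑ j, A i j ^ 2 := by positivity
  nlinarith

/-- Cauchy–Schwarz for the dot product. -/
theorem dot_cs {d : ℕ} (v w : Fin d → ℂ) :
    ‖star v ⬝ᵥ w‖ ^ 2 ≤ (∑ i, ‖v i‖ ^ 2) * ∑ i, ‖w i‖ ^ 2 := by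
  have h : ‖star v ⬝ᵥ w‖ ≤ ∑ i, ‖v i‖ * ‖w i‖ := by
    refine (norm_sum_le _ _).trans (le_of_eq ?_)
    simp
  calc _ ≤ (∑ i, ‖v i‖ * ‖w i‖) ^ 2 := by gcongr
    _ ≤ _ := Finset.sum_mul_sq_le_sq_mul_sq _ _ _

theorem dot_self {d : ℕ} (v : Fin d → ℂ) :
    star v ⬝ᵥ v = ((∑ i, ‖v i‖ ^ 2 : ℝ) : ℂ) := by
  simp only [dotProduct, Pi.star_apply, RCLike.star_def, Complex.conj_mul']
  push_cast; rfl

theorem luders_bound {d k : ℕ} (ψ : Fin k → Fin d → ℂ)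
    (hψ : ∑ x, vecMulVec (ψ x) (star (ψ x)) = (1 : Matrix (Fin d) (Fin d) ℂ))
    (X Y : Matrix (Fin d) (Fin d) ℂ) (hX : X.IsHermitian) (hY : Y.IsHermitian) :
    (Y * luders ψ X).trace.re ≤ ((X * X).trace.re + (Y * Y).trace.re) / 2 := by
  have tr : ∀ (Z : Matrix (Fin d) (Fin d) ℂ), Z.IsHermitian →
      (Z * Z).trace.re = ∑ x, ∑ i, ‖(Z *ᵥ ψ x) i‖ ^ 2 := by
    intro Z hZ
    have : (Z * Z).trace = ∑ x, star (Z *ᵥ ψ x) ⬝ᵥ (Z *ᵥ ψ x) := by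
      conv_lhs => rw [← mul_one (Z * Z), ← hψ, Finset.mul_sum, trace_sum]
      refine Finset.sum_congr rfl fun x _ => ?_
      rw [Matrix.mul_vecMulVec, trace_vecMulVec, star_mulVec, hZ.eq, ← mulVec_mulVec,
        dotProduct_comm, dotProduct_mulVec]
    rw [this]
    simp only [dot_self]
    rw [← Complex.ofReal_sum, Complex.ofReal_re]
  rw [tr X hX, tr Y hY, luders, Finset.mul_sum, trace_sum, Complex.re_sum,
    ← Finset.sum_add_distrib, Finset.sum_div]
  refine Finset.sum_le_sum fun x _ => ?_
  set v := ψ x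
  have e : (Y * ((star v ⬝ᵥ v)⁻¹ • (vecMulVec v (star v) * X * vecMulVec v (star v)))).trace
      = (star v ⬝ᵥ v)⁻¹ * ((star v ⬝ᵥ X *ᵥ v) * (star v ⬝ᵥ Y *ᵥ v)) := by
    rw [Matrix.mul_smul, trace_smul, smul_eq_mul, Matrix.mul_assoc (vecMulVec v (star v)),
      Matrix.mul_vecMulVec, vecMulVec_mul_vecMulVec, Matrix.mul_vecMulVec, trace_vecMulVec]
    simp only [mulVec_smul, dotProduct_smul, smul_dotProduct, smul_eq_mul, vecMulVec_smul,
      smul_vecMulVec]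
    rw [dotProduct_comm (Y *ᵥ v)]
  rw [e]
  refine (Complex.re_le_norm _).trans ?_
  rw [norm_mul, norm_mul, norm_inv, dot_self]
  have hx := dot_cs v (X *ᵥ v)
  have hy := dot_cs v (Y *ᵥ v)
  set N := ∑ i, ‖v i‖ ^ 2
  set p := ∑ i, ‖(X *ᵥ v) i‖ ^ 2
  set q := ∑ i, ‖(Y *ᵥ v) i‖ ^ 2
  set a := ‖star v ⬝ᵥ X *ᵥ v‖
  set b := ‖star v ⬝ᵥ Y *ᵥ v‖
  have hN : 0 ≤ N := by positivity
  have hp : 0 ≤ p := by positivity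
  have hq : 0 ≤ q := by positivity
  rw [Complex.norm_real, Real.norm_of_nonneg hN]
  rcases hN.eq_or_lt with h | h
  · rw [← h]; simp; positivity
  · rw [inv_mul_le_iff₀ h]
    nlinarith [sq_nonneg (a - b)]

theorem sum_neg_bool {n : ℕ} (f : (Fin n → Bool) → ℝ) :
    ∑ z : Fin n → Bool, f (fun i => !(z i)) = ∑ z, f z :=
  (Equiv.sum_comp (Equiv.arrowCongr (Equiv.refl (Fin n)) Equiv.boolNot) f)

theorem sign_not (b : Bool) : sign (!b) = - sign b := by cases b <;> simp [sign]

/-- Truncation by an even factor in `[0,1]` does not increase the symmetrized exponential. -/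
theorem trunc_bound {n : ℕ} (a : (Fin n → Bool) → ℝ) (ha0 : ∀ z, 0 ≤ a z) (ha1 : ∀ z, a z ≤ 1)
    (hev : ∀ z, a (fun i => !(z i)) = a z)
    (T : (Fin n → Bool) → (Fin n → Bool) → ℝ)
    (hT : ∀ z z', T (fun i => !(z i)) z' = - T z z') :
    ∑ z, ∑ z', Real.exp (a z * a z' * T z z') ≤ ∑ z, ∑ z', Real.exp (T z z') := by
  have hcosh : ∀ (F : (Fin n → Bool) → (Fin n → Bool) → ℝ),
      (∀ z z', F (fun i => !(z i)) z' = - F z z') →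
      ∑ z, ∑ z', Real.exp (F z z') = ∑ z, ∑ z', Real.cosh (F z z') := by
    intro F hF
    have h := sum_neg_bool (fun z => ∑ z', Real.exp (F z z'))
    simp only [hF] at h
    simp only [Real.cosh_eq, ← Finset.sum_div, Finset.sum_add_distrib]
    rw [h]; ring
  rw [hcosh T hT, hcosh (fun z z' => a z * a z' * T z z') (fun z z' => by
    simp only [hT, hev]; ring)]
  refine Finset.sum_le_sum fun z _ => Finset.sum_le_sum fun z' _ => ?_
  rw [Real.cosh_le_cosh, abs_mul, abs_of_nonneg (mul_nonneg (ha0 z) (ha0 z'))]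
  exact mul_le_of_le_one_left (abs_nonneg _) (mul_le_one₀ (ha1 z) (ha0 z') (ha1 z'))

/-- Bounding the decoupled chi-square fluctuation term by the projected
Hilbert–Schmidt norm of the average Lüders channel: for the binary perturbations
`Δ_z = (c ε/√(dℓ)) ∑_{i<ℓ} z_i V_i`, their normalizations
`Δ̄_z = min{1, 1/(d‖Δ_z‖_op)}·Δ_z` and the average Lüders channel `H̄` of `n` rank-1
POVMs, whenever `n < d²/(6c²ε²)`:
`E_{z,z'}[exp(n d Tr[Δ̄_{z'} H̄(Δ̄_z)])] − 1
   ≤ exp((c²n²ε⁴/ℓ²) ∑_{i,j≤ℓ} Tr[V_i H̄(V_j)]²) − 1 + 4 exp(−d)`. -/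
theorem chi_square_fluctuation_bound :
    ∃ c : ℝ, 0 < c ∧ c ≤ 10 * Real.sqrt 2 ∧
      ∀ d : ℕ, 16 ≤ d →
      ∀ ℓ : ℕ, d ^ 2 ≤ 2 * ℓ → ℓ ≤ d ^ 2 - 1 →
      ∀ V : Fin (d ^ 2) → Matrix (Fin d) (Fin d) ℂ,
      (∀ i, (V i).IsHermitian) →
      (∀ i j, ((V i)ᴴ * V j).trace = if i = j then 1 else 0) →
      (∀ h : d ^ 2 - 1 < d ^ 2,
        V ⟨d ^ 2 - 1, h⟩ = ((Real.sqrt d : ℂ))⁻¹ • (1 : Matrix (Fin d) (Fin d) ℂ)) →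
      ∀ ε : ℝ, 0 < ε → ε < 1 / c ^ 2 →
      ∀ n k : ℕ, ∀ ψ : Fin n → Fin k → Fin d → ℂ,
      (∀ i x, ψ i x ≠ 0) →
      (∀ i, ∑ x, vecMulVec (ψ i x) (star (ψ i x)) = (1 : Matrix (Fin d) (Fin d) ℂ)) →
      (n : ℝ) < (d : ℝ) ^ 2 / (6 * c ^ 2 * ε ^ 2) →
      ∀ hℓ : ℓ ≤ d ^ 2,
      let Hbar : Matrix (Fin d) (Fin d) ℂ → Matrix (Fin d) (Fin d) ℂ := fun X =>
        (n : ℂ)⁻¹ • ∑ i, luders (ψ i) X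
      let Δ : (Fin ℓ → Bool) → Matrix (Fin d) (Fin d) ℂ := fun z =>
        ((c * ε / Real.sqrt (d * ℓ) : ℝ) : ℂ) •
          ∑ i : Fin ℓ, (sign (z i) : ℂ) • V (Fin.castLE hℓ i)
      let Δbar : (Fin ℓ → Bool) → Matrix (Fin d) (Fin d) ℂ := fun z =>
        ((min 1 (1 / ((d : ℝ) * opNorm (Δ z))) : ℝ) : ℂ) • Δ z
      (∑ z : Fin ℓ → Bool, ∑ z' : Fin ℓ → Bool,
          Real.exp ((n : ℝ) * d * ((Δbar z') * Hbar (Δbar z)).trace.re)) / 2 ^ ℓ / 2 ^ ℓ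
          - 1
        ≤ Real.exp ((c ^ 2 * (n : ℝ) ^ 2 * ε ^ 4 / (ℓ : ℝ) ^ 2) *
              ∑ i : Fin ℓ, ∑ j : Fin ℓ,
                ((V (Fin.castLE hℓ i) * Hbar (V (Fin.castLE hℓ j))).trace.re) ^ 2)
            - 1 + 4 * Real.exp (-(d : ℝ)) := by
  refine ⟨1, one_pos, ?_, ?_⟩
  · have : (1:ℝ) ≤ Real.sqrt 2 := Real.one_le_sqrt.mpr (by norm_num)
    linarith
  intro d hd ℓ hdl hld V hVh hVo _ ε hε hε1 n k ψ _ hψ hn hℓ Hbar Δ Δbar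
  have hdpos : (0:ℝ) < d := by exact_mod_cast (by omega : 0 < d)
  have hlpos : (0:ℝ) < ℓ := by
    have : 0 < d ^ 2 := by positivity
    exact_mod_cast (by omega : 0 < ℓ)
  set W : Fin ℓ → Matrix (Fin d) (Fin d) ℂ := fun i => V (Fin.castLE hℓ i) with hW
  let A : Fin ℓ → Fin ℓ → ℝ := fun i j => (W i * Hbar (W j)).trace.re
  have lsmul : ∀ {m : ℕ} (φ : Fin m → Fin d → ℂ) (a : ℂ) X, luders φ (a • X) = a • luders φ X := by
    intro m φ a X
    simp only [luders, Finset.smul_sum, Matrix.mul_smul, Matrix.smul_mul]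
    exact Finset.sum_congr rfl fun x _ => smul_comm _ _ _
  have ladd : ∀ {m : ℕ} (φ : Fin m → Fin d → ℂ) X Y, luders φ (X + Y) = luders φ X + luders φ Y := by
    intro m φ X Y
    simp only [luders, Matrix.mul_add, Matrix.add_mul, smul_add, Finset.sum_add_distrib]
  have Hsmul : ∀ (a : ℂ) X, Hbar (a • X) = a • Hbar X := by
    intro a X
    simp only [Hbar, lsmul, ← Finset.smul_sum]
    exact smul_comm _ _ _
  have Hadd : ∀ X Y, Hbar (X + Y) = Hbar X + Hbar Y := by
    intro X Y
    simp only [Hbar, ladd, Finset.sum_add_distrib, smul_add]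
  let HL : Matrix (Fin d) (Fin d) ℂ →ₗ[ℂ] Matrix (Fin d) (Fin d) ℂ :=
    { toFun := Hbar, map_add' := Hadd, map_smul' := Hsmul }
  have Hsum : ∀ (g : Fin ℓ → Matrix (Fin d) (Fin d) ℂ), Hbar (∑ j, g j) = ∑ j, Hbar (g j) :=
    fun g => map_sum HL g Finset.univ
  have bil : ∀ x y : Fin ℓ → ℝ,
      ((∑ i, ((y i : ℝ) : ℂ) • W i) * Hbar (∑ j, ((x j : ℝ) : ℂ) • W j)).trace.re
        = ∑ i, ∑ j, y i * x j * A i j := by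
    intro x y
    rw [Hsum, Finset.sum_mul_sum, trace_sum, Complex.re_sum]
    refine Finset.sum_congr rfl fun i _ => ?_
    rw [trace_sum, Complex.re_sum]
    refine Finset.sum_congr rfl fun j _ => ?_
    rw [Hsmul, Matrix.smul_mul, Matrix.mul_smul, smul_smul, trace_smul, smul_eq_mul,
      ← Complex.ofReal_mul, Complex.re_ofReal_mul]
  have hherm : ∀ x : Fin ℓ → ℝ, (∑ i, ((x i : ℝ) : ℂ) • W i).IsHermitian := by
    intro x
    rw [IsHermitian, conjTranspose_sum]
    refine Finset.sum_congr rfl fun i _ => ?_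
    rw [conjTranspose_smul, (hVh _).eq]
    simp [hW]
  have hnorm : ∀ x : Fin ℓ → ℝ, ((∑ i, ((x i : ℝ) : ℂ) • W i) *
      (∑ i, ((x i : ℝ) : ℂ) • W i)).trace.re = ∑ i, x i ^ 2 := by
    intro x
    rw [Finset.sum_mul_sum, trace_sum, Complex.re_sum]
    refine Finset.sum_congr rfl fun i _ => ?_
    rw [trace_sum, Finset.sum_eq_single i]
    · have h := hVo (Fin.castLE hℓ i) (Fin.castLE hℓ i)
      rw [(hVh _).eq, if_pos rfl] at h
      rw [Matrix.smul_mul, Matrix.mul_smul, smul_smul, trace_smul, h, smul_eq_mul, mul_one,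
        ← Complex.ofReal_mul, Complex.ofReal_re, sq]
    · intro j _ hj
      have h := hVo (Fin.castLE hℓ i) (Fin.castLE hℓ j)
      rw [(hVh _).eq, if_neg (fun h => hj (Fin.castLE_injective hℓ h).symm)] at h
      rw [Matrix.smul_mul, Matrix.mul_smul, smul_smul, trace_smul, h, smul_zero]
    · simp
  have hHb : ∀ X Y : Matrix (Fin d) (Fin d) ℂ, X.IsHermitian → Y.IsHermitian →
      0 ≤ ((X * X).trace.re + (Y * Y).trace.re) / 2 →
      (Y * Hbar X).trace.re ≤ ((X * X).trace.re + (Y * Y).trace.re) / 2 := by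
    intro X Y hX hY h0
    have e : (Y * Hbar X).trace.re = (n:ℝ)⁻¹ * ∑ i, (Y * luders (ψ i) X).trace.re := by
      simp only [Hbar]
      rw [Matrix.mul_smul, trace_smul, Finset.mul_sum, trace_sum, smul_eq_mul,
        ← Complex.re_sum, ← Complex.ofReal_natCast, ← Complex.ofReal_inv, Complex.re_ofReal_mul]
    rw [e]
    rcases Nat.eq_zero_or_pos n with hn0 | hn0
    · subst hn0; simpa using h0
    · have hn0' : (0:ℝ) < n := by exact_mod_cast hn0
      rw [inv_mul_le_iff₀ hn0']
      refine (Finset.sum_le_sum fun i _ => luders_bound (ψ i) (hψ i) X Y hX hY).trans ?_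
      simp
  have hA : ∀ x : Fin ℓ → ℝ, ∑ i, (∑ j, A i j * x j) ^ 2 ≤ ∑ i, x i ^ 2 := by
    intro x
    let y : Fin ℓ → ℝ := fun i => ∑ j, A i j * x j
    have h := hHb _ _ (hherm x) (hherm y) (by rw [hnorm, hnorm]; positivity)
    rw [hnorm, hnorm, bil] at h
    have e : ∑ i, ∑ j, y i * x j * A i j = ∑ i, y i ^ 2 := by
      refine Finset.sum_congr rfl fun i _ => ?_
      rw [sq]
      conv_rhs => rw [show y i * y i = y i * ∑ j, A i j * x j from rfl, Finset.mul_sum]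
      exact Finset.sum_congr rfl fun j _ => by ring
    rw [e] at h
    have : ∑ i, y i ^ 2 ≤ ∑ i, x i ^ 2 := by linarith
    exact this
  let a : (Fin ℓ → Bool) → ℝ := fun z => min 1 (1 / ((d : ℝ) * opNorm (Δ z)))
  let T : (Fin ℓ → Bool) → (Fin ℓ → Bool) → ℝ := fun z z' =>
    (n * ε ^ 2 / ℓ) * ∑ i, ∑ j, sign (z' i) * sign (z j) * A i j
  have hΔneg : ∀ z, Δ (fun i => !(z i)) = - Δ z := by
    intro z
    simp only [Δ, sign_not, Complex.ofReal_neg, neg_smul, Finset.sum_neg_distrib, smul_neg]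
  have hev : ∀ z, a (fun i => !(z i)) = a z := by
    intro z
    simp only [a, hΔneg]
    have : opNorm (-Δ z) = opNorm (Δ z) := by
      simp only [opNorm, map_neg, norm_neg]
    rw [this]
  have ha0 : ∀ z, 0 ≤ a z := fun z => by
    have : 0 ≤ opNorm (Δ z) := norm_nonneg _
    exact le_min zero_le_one (by positivity)
  have hT : ∀ z z', T (fun i => !(z i)) z' = - T z z' := by
    intro z z'
    simp only [T, sign_not, mul_neg, neg_mul, Finset.sum_neg_distrib]
  have hexp : ∀ z z', (n : ℝ) * d * ((Δbar z') * Hbar (Δbar z)).trace.re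
      = a z * a z' * T z z' := by
    intro z z'
    simp only [Δbar, Δ]
    rw [Hsmul, Hsmul, Matrix.smul_mul, Matrix.smul_mul, Matrix.mul_smul, Matrix.mul_smul]
    simp only [trace_smul, smul_eq_mul, Complex.re_ofReal_mul]
    have hb := bil (fun i => sign (z i)) (fun i => sign (z' i))
    simp only [hW] at hb
    rw [hb]
    have hsq : Real.sqrt (d * ℓ) * Real.sqrt (d * ℓ) = d * ℓ :=
      Real.mul_self_sqrt (by positivity)
    have hc : (n:ℝ) * d * ((1 * ε / Real.sqrt (d * ℓ)) * (1 * ε / Real.sqrt (d * ℓ)))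
        = n * ε ^ 2 / ℓ := by
      rw [div_mul_div_comm, hsq]; field_simp
    simp only [T, ← hc, a, Δ]
    ring
  have htr := trunc_bound a ha0 (fun z => min_le_left _ _) hev T hT
  have hch := bilin_chaos (n * ε ^ 2 / ℓ) (by positivity) (by
    have hdl' : (d:ℝ) ^ 2 ≤ 2 * ℓ := by exact_mod_cast hdl
    rw [lt_div_iff₀ (by positivity)] at hn
    rw [div_le_iff₀ hlpos]
    linarith) ℓ A hA
  simp only [hexp]
  have h4 := (Real.exp_pos (-(d:ℝ))).le
  have hfin : (∑ z, ∑ z', Real.exp (a z * a z' * T z z')) / 2 ^ ℓ / 2 ^ ℓ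
      ≤ Real.exp ((n * ε ^ 2 / ℓ) ^ 2 * ∑ i, ∑ j, A i j ^ 2) := by
    rw [div_div, div_le_iff₀ (by positivity), mul_comm (Real.exp _)]
    exact htr.trans hch
  have e : (1 ^ 2 * (n : ℝ) ^ 2 * ε ^ 4 / (ℓ : ℝ) ^ 2) = (n * ε ^ 2 / ℓ) ^ 2 := by
    rw [div_pow]; ring
  rw [e]
  have hfin' : (∑ z, ∑ z', Real.exp (a z * a z' * T z z')) / 2 ^ ℓ / 2 ^ ℓ
      ≤ Real.exp ((n * ε ^ 2 / ℓ) ^ 2 * ∑ i : Fin ℓ, ∑ j : Fin ℓ,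
        ((V (Fin.castLE hℓ i) * Hbar (V (Fin.castLE hℓ j))).trace.re) ^ 2) := hfin
  linarith


end
end

section
/- Let Z be a finite set equipped with a probability distribution and let z, z' be independent samples from it. Let f : Z × Z → ℝ, let a : Z → [0,1], and let δ ≥ 0 satisfy P(a(z) < 1) ≤ δ. Then E[exp(a(z) a(z') f(z, z'))] ≤ E[exp(f(z, z'))] + 2δ. -/
open BigOperators

noncomputable section

/-- Truncation trick: if `z, z'` are independent samples from a finite probability
space, `f : Z × Z → ℝ`, `a : Z → [0,1]` and `P(a(z) < 1) ≤ δ`, then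
`E[exp(a(z) a(z') f(z,z'))] ≤ E[exp(f(z,z'))] + 2δ`. -/
theorem exp_truncation_bound
    {Z : Type} [Fintype Z] [Nonempty Z]
    (w : Z → ℝ) (hw : ∀ z, 0 ≤ w z) (hw1 : ∑ z, w z = 1)
    (f : Z → Z → ℝ) (a : Z → ℝ) (ha : ∀ z, a z ∈ Set.Icc (0 : ℝ) 1)
    (δ : ℝ) (hδ : 0 ≤ δ)
    (hP : ∑ z ∈ Finset.univ.filter (fun z => a z < 1), w z ≤ δ) :
    ∑ z, ∑ z', w z * w z' * Real.exp (a z * a z' * f z z')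
      ≤ (∑ z, ∑ z', w z * w z' * Real.exp (f z z')) + 2 * δ := by
  have key : ∀ z z', Real.exp (a z * a z' * f z z')
      ≤ Real.exp (f z z') + (if a z < 1 then 1 else 0) + (if a z' < 1 then 1 else 0) := by
    intro z z'
    obtain ⟨h0, h1⟩ := ha z
    obtain ⟨h0', h1'⟩ := ha z'
    have hb : Real.exp (a z * a z' * f z z') ≤ Real.exp (f z z') + 1 := by
      have ht0 : 0 ≤ a z * a z' := mul_nonneg h0 h0'
      have ht1 : a z * a z' ≤ 1 := mul_le_one₀ h1 h0' h1'
      rcases le_total 0 (f z z') with hf | hf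
      · have : Real.exp (a z * a z' * f z z') ≤ Real.exp (f z z') :=
          Real.exp_le_exp.mpr (mul_le_of_le_one_left hf ht1)
        linarith
      · have : Real.exp (a z * a z' * f z z') ≤ 1 :=
          Real.exp_le_one_iff.mpr (mul_nonpos_of_nonneg_of_nonpos ht0 hf)
        linarith [Real.exp_pos (f z z')]
    by_cases c : a z < 1
    · by_cases c' : a z' < 1
      · rw [if_pos c, if_pos c']; linarith
      · rw [if_pos c, if_neg c']; linarith
    · by_cases c' : a z' < 1
      · rw [if_neg c, if_pos c']; linarith
      · have e : a z = 1 := le_antisymm h1 (not_lt.mp c)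
        have e' : a z' = 1 := le_antisymm h1' (not_lt.mp c')
        simp [e, e']
  rw [Finset.sum_filter] at hP
  have e1 : ∑ z, ∑ z', w z * w z' * (if a z < 1 then (1 : ℝ) else 0)
      = ∑ z, if a z < 1 then w z else 0 := by
    refine Finset.sum_congr rfl fun z _ => ?_
    rw [← Finset.sum_mul, ← Finset.mul_sum, hw1]
    split_ifs <;> simp
  have e2 : ∑ z, ∑ z', w z * w z' * (if a z' < 1 then (1 : ℝ) else 0)
      = ∑ z, if a z < 1 then w z else 0 := by
    rw [Finset.sum_comm, ← e1]
    refine Finset.sum_congr rfl fun z _ => Finset.sum_congr rfl fun z' _ => ?_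
    ring
  calc ∑ z, ∑ z', w z * w z' * Real.exp (a z * a z' * f z z')
      ≤ ∑ z, ∑ z', w z * w z' * (Real.exp (f z z') + (if a z < 1 then 1 else 0)
          + (if a z' < 1 then 1 else 0)) :=
        Finset.sum_le_sum fun z _ => Finset.sum_le_sum fun z' _ =>
          mul_le_mul_of_nonneg_left (key z z') (mul_nonneg (hw z) (hw z'))
    _ = (∑ z, ∑ z', w z * w z' * Real.exp (f z z'))
          + (∑ z, if a z < 1 then w z else 0) + (∑ z, if a z < 1 then w z else 0) := by
        simp only [mul_add, Finset.sum_add_distrib]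
        rw [e1, e2]
    _ ≤ _ := by linarith

end
end

section
/- Let d ≥ 1, let M ∈ ℂ^{d×d} be Hermitian, and let ψ be a random unit vector distributed according to the uniform (rotation-invariant Haar) probability measure on the unit sphere of ℂ^d. Then E[⟨ψ| M |ψ⟩²] = (Tr[M]² + Tr[M²]) / (d(d+1)). -/
open Matrix BigOperators MeasureTheory

noncomputable section

lemma hs_integrable {d : ℕ} (μ : Measure (Fin d → ℂ)) [IsProbabilityMeasure μ]
    (hsupp : μ {v : Fin d → ℂ | star v ⬝ᵥ v = 1}ᶜ = 0)
    (f : (Fin d → ℂ) → ℝ) (hf : Continuous f) : Integrable f μ := by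
  have hcl : IsClosed {v : Fin d → ℂ | star v ⬝ᵥ v = 1} := by
    apply isClosed_eq _ continuous_const
    simp only [dotProduct]
    fun_prop
  have hK : IsCompact {v : Fin d → ℂ | star v ⬝ᵥ v = 1} := by
    apply (isCompact_closedBall (0 : Fin d → ℂ) 1).of_isClosed_subset hcl
    intro v hv
    rw [mem_closedBall_zero_iff, pi_norm_le_iff_of_nonneg zero_le_one]
    intro i
    have h1 : ∑ k, ‖v k‖ ^ 2 = 1 := by
      have hv' : star v ⬝ᵥ v = 1 := hv
      have h2 := congrArg Complex.re hv'
      simp only [dotProduct, Complex.re_sum, Complex.one_re] at h2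
      rw [← h2]
      refine Finset.sum_congr rfl fun k _ => ?_
      rw [← Complex.normSq_eq_norm_sq]
      simp [Complex.normSq_apply]
    have h3 : ‖v i‖ ^ 2 ≤ ∑ k, ‖v k‖ ^ 2 :=
      Finset.single_le_sum (f := fun k => ‖v k‖ ^ 2) (fun k _ => by positivity) (Finset.mem_univ i)
    rw [h1] at h3
    nlinarith [norm_nonneg (v i)]
  have h := hf.continuousOn.integrableOn_compact (μ := μ) hK
  rwa [IntegrableOn, Measure.restrict_eq_self_of_ae_mem] at h
  exact hsupp

lemma hs_invariant {d : ℕ} (μ : Measure (Fin d → ℂ))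
    (hinv : ∀ U : Matrix.unitaryGroup (Fin d) ℂ,
      μ.map (fun v => (U : Matrix (Fin d) (Fin d) ℂ).mulVec v) = μ)
    (U : Matrix.unitaryGroup (Fin d) ℂ)
    (f : (Fin d → ℂ) → ℝ) (hf : Continuous f) :
    ∫ v, f ((U : Matrix (Fin d) (Fin d) ℂ).mulVec v) ∂μ = ∫ v, f v ∂μ := by
  conv_rhs => rw [← hinv U]
  rw [integral_map]
  · exact (Continuous.matrix_mulVec continuous_const continuous_id).aemeasurable
  · exact hf.aestronglyMeasurable

/-- The unitary `1 + (c-1) w w* / 2`, `w = e_i + ω e_j`. -/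
lemma hs_unitary {d : ℕ} (i j : Fin d) (hij : i ≠ j) (c ω : ℂ) (hc : star c * c = 1)
    (hω : star ω * ω = 1) : ∃ U : Matrix.unitaryGroup (Fin d) ℂ, ∀ v : Fin d → ℂ,
      ((U : Matrix (Fin d) (Fin d) ℂ).mulVec v) i
        = (1 + c) / 2 * v i + (c - 1) / 2 * star ω * v j := by
  set w : Fin d → ℂ := Pi.single i 1 + Pi.single j ω with hw
  have hww : star w ⬝ᵥ w = 2 := by
    simp [hw, dotProduct_add, hij, hij.symm] 
    simp at hω
    rw [hω]; norm_num
  set P : Matrix (Fin d) (Fin d) ℂ := vecMulVec w (star w) with hP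
  have hPP : P * P = (2 : ℂ) • P := by
    rw [hP, vecMulVec_mul_vecMulVec, hww]
    ext a b; simp [vecMulVec_apply]; ring
  have hPs : star P = P := by
    ext a b; simp [hP, vecMulVec_apply, Matrix.star_apply, mul_comm]
  refine ⟨⟨1 + ((c - 1) / 2) • P, ?_⟩, fun v => ?_⟩
  · rw [Matrix.mem_unitaryGroup_iff', star_add, star_smul, hPs, star_one]
    rw [add_mul, mul_add, mul_add, smul_mul_smul_comm, hPP, smul_smul, one_mul, mul_one, one_mul,
      add_assoc, ← add_smul, ← add_smul]
    have : (c - 1) / 2 + (star ((c - 1) / 2) + star ((c - 1) / 2) * ((c - 1) / 2) * 2) = 0 := by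
      simp at hc ⊢
      linear_combination hc / 2
    rw [this]; simp
  · have hv : star w ⬝ᵥ v = v i + star ω * v j := by
      simp [hw, add_dotProduct]
    have hwi : w i = 1 := by simp [hw, hij]
    show ((1 + ((c - 1) / 2) • P) *ᵥ v) i = _
    rw [add_mulVec, one_mulVec, smul_mulVec, hP, vecMulVec_mulVec, hv]
    simp [hwi]
    ring

lemma hs_moments {d : ℕ} (μ : Measure (Fin d → ℂ)) [IsProbabilityMeasure μ]
    (hsupp : μ {v : Fin d → ℂ | star v ⬝ᵥ v = 1}ᶜ = 0)
    (hinv : ∀ U : Matrix.unitaryGroup (Fin d) ℂ,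
      μ.map (fun v => (U : Matrix (Fin d) (Fin d) ℂ).mulVec v) = μ)
    (i j : Fin d) (hij : i ≠ j) :
    ∫ v, Complex.normSq (v i) ^ 2 ∂μ = ∫ v, Complex.normSq (v j) ^ 2 ∂μ ∧
    ∫ v, Complex.normSq (v i) ^ 2 ∂μ
      = 2 * ∫ v, Complex.normSq (v i) * Complex.normSq (v j) ∂μ := by
  have cN : ∀ k, Continuous fun v : Fin d → ℂ => Complex.normSq (v k) := fun k =>
    Complex.continuous_normSq.comp (continuous_apply k)
  have key : ∀ c ω : ℂ, star c * c = 1 → star ω * ω = 1 →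
      ∫ v, Complex.normSq ((1 + c) / 2 * v i + (c - 1) / 2 * star ω * v j) ^ 2 ∂μ
        = ∫ v, Complex.normSq (v i) ^ 2 ∂μ := by
    intro c ω hc hω
    obtain ⟨U, hU⟩ := hs_unitary i j hij c ω hc hω
    rw [← hs_invariant μ hinv U (fun v => Complex.normSq (v i) ^ 2) ((cN i).pow 2)]
    simp only [hU]
  have hInt : ∀ c ω : ℂ, Integrable (fun v : Fin d → ℂ =>
      Complex.normSq ((1 + c) / 2 * v i + (c - 1) / 2 * star ω * v j) ^ 2) μ := by
    intro c ω
    apply hs_integrable μ hsupp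
    exact (Complex.continuous_normSq.comp (by fun_prop)).pow 2
  have hsw : ∫ v, Complex.normSq (v i) ^ 2 ∂μ = ∫ v, Complex.normSq (v j) ^ 2 ∂μ := by
    rw [← key (-1) 1 (by simp) (by simp)]
    congr 1; ext v
    norm_num
  refine ⟨hsw, ?_⟩
  have k1 := key Complex.I 1 (by simp) (by simp)
  have k2 := key Complex.I (-1) (by simp) (by simp)
  have k3 := key Complex.I Complex.I (by simp) (by simp)
  have k4 := key Complex.I (-Complex.I) (by simp) (by simp)
  have hi : Integrable (fun v : Fin d → ℂ => Complex.normSq (v i) ^ 2) μ :=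
    hs_integrable μ hsupp _ ((cN i).pow 2)
  have hj : Integrable (fun v : Fin d → ℂ => Complex.normSq (v j) ^ 2) μ :=
    hs_integrable μ hsupp _ ((cN j).pow 2)
  have hb : Integrable (fun v : Fin d → ℂ => Complex.normSq (v i) * Complex.normSq (v j)) μ :=
    hs_integrable μ hsupp _ ((cN i).mul (cN j))
  have hsum : ∫ v, (((Complex.normSq ((1 + Complex.I) / 2 * v i + (Complex.I - 1) / 2 * star 1 * v j) ^ 2
      + Complex.normSq ((1 + Complex.I) / 2 * v i + (Complex.I - 1) / 2 * star (-1) * v j) ^ 2)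
      + Complex.normSq ((1 + Complex.I) / 2 * v i + (Complex.I - 1) / 2 * star Complex.I * v j) ^ 2)
      + Complex.normSq ((1 + Complex.I) / 2 * v i + (Complex.I - 1) / 2 * star (-Complex.I) * v j) ^ 2) ∂μ
      = ∫ v, ((Complex.normSq (v i) ^ 2 + Complex.normSq (v j) ^ 2)
        + 4 * (Complex.normSq (v i) * Complex.normSq (v j))) ∂μ := by
    congr 1; ext v
    simp [Complex.normSq_apply]
    ring
  rw [integral_add (((hInt _ _).fun_add (hInt _ _)).fun_add (hInt _ _)) (hInt _ _),
    integral_add ((hInt _ _).fun_add (hInt _ _)) (hInt _ _),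
    integral_add (hInt _ _) (hInt _ _), k1, k2, k3, k4,
    integral_add (hi.fun_add hj) (hb.const_mul 4), integral_add hi hj, integral_const_mul] at hsum
  linarith

lemma hs_values {d : ℕ} (hd : 1 ≤ d) (μ : Measure (Fin d → ℂ)) [IsProbabilityMeasure μ]
    (hsupp : μ {v : Fin d → ℂ | star v ⬝ᵥ v = 1}ᶜ = 0)
    (hinv : ∀ U : Matrix.unitaryGroup (Fin d) ℂ,
      μ.map (fun v => (U : Matrix (Fin d) (Fin d) ℂ).mulVec v) = μ)
    (i j : Fin d) :
    ∫ v, Complex.normSq (v i) * Complex.normSq (v j) ∂μ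
      = (1 + if i = j then 1 else 0) / ((d : ℝ) * (d + 1)) := by
  have cN : ∀ k, Continuous fun v : Fin d → ℂ => Complex.normSq (v k) := fun k =>
    Complex.continuous_normSq.comp (continuous_apply k)
  let i0 : Fin d := ⟨0, hd⟩
  set a := ∫ v, Complex.normSq (v i0) ^ 2 ∂μ with ha
  have hdiag : ∀ k, ∫ v, Complex.normSq (v k) ^ 2 ∂μ = a := by
    intro k
    by_cases h : k = i0
    · rw [h]
    · exact (hs_moments μ hsupp hinv k i0 h).1
  have hall : ∀ k l, ∫ v, Complex.normSq (v k) * Complex.normSq (v l) ∂μ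
      = a / 2 * (1 + if k = l then 1 else 0) := by
    intro k l
    by_cases h : k = l
    · subst h
      simp only [← pow_two, hdiag, if_true]
      ring
    · have := (hs_moments μ hsupp hinv k l h).2
      rw [hdiag] at this
      simp only [h, if_false]
      linarith
  have hone : ∫ v, ∑ k, ∑ l, Complex.normSq (v k) * Complex.normSq (v l) ∂μ = 1 := by
    have : (fun v : Fin d → ℂ => ∑ k, ∑ l, Complex.normSq (v k) * Complex.normSq (v l))
        =ᵐ[μ] fun _ => (1 : ℝ) := by
      have hae : ∀ᵐ v ∂μ, star v ⬝ᵥ v = 1 := hsupp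
      filter_upwards [hae] with v hv
      have h2 := congrArg Complex.re hv
      simp only [dotProduct, Complex.re_sum, Complex.one_re] at h2
      rw [← Finset.sum_mul_sum]
      have : ∑ k, Complex.normSq (v k) = 1 := by
        rw [← h2]
        refine Finset.sum_congr rfl fun k _ => ?_
        simp [Complex.normSq_apply]
      rw [this]; norm_num
    rw [integral_congr_ae this]; simp
  have hI : ∀ k l, Integrable (fun v : Fin d → ℂ => Complex.normSq (v k) * Complex.normSq (v l)) μ :=
    fun k l => hs_integrable μ hsupp _ ((cN k).mul (cN l))
  rw [integral_finsetSum _ fun k _ => integrable_finsetSum _ fun l _ => hI k l] at hone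
  simp_rw [integral_finsetSum _ fun l _ => hI _ l, hall, ← Finset.mul_sum,
    Finset.sum_add_distrib] at hone
  simp at hone
  have hd' : (0 : ℝ) < d := by exact_mod_cast hd
  rw [hall, eq_div_iff (by positivity)]
  linear_combination (1 + if i = j then (1 : ℝ) else 0) * hone

/-- Second moment of a Hermitian quadratic form under the Haar measure on the unit
sphere of `ℂ^d`: if `μ` is a probability measure concentrated on the unit sphere
`{ψ : ⟨ψ,ψ⟩ = 1}` and invariant under every unitary `U ∈ U(d)` (this uniquely
characterizes the uniform/Haar measure on the sphere), then for every Hermitian `M`,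
`E[⟨ψ|M|ψ⟩²] = (Tr[M]² + Tr[M²])/(d(d+1))`. -/
theorem haar_sphere_second_moment
    {d : ℕ} (hd : 1 ≤ d)
    (M : Matrix (Fin d) (Fin d) ℂ) (hM : M.IsHermitian)
    (μ : Measure (Fin d → ℂ)) [IsProbabilityMeasure μ]
    (hsupp : μ {v : Fin d → ℂ | star v ⬝ᵥ v = 1}ᶜ = 0)
    (hinv : ∀ U : Matrix.unitaryGroup (Fin d) ℂ,
      μ.map (fun v => (U : Matrix (Fin d) (Fin d) ℂ).mulVec v) = μ) :
    ∫ v, ((star v ⬝ᵥ M.mulVec v).re) ^ 2 ∂μ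
      = ((M.trace.re) ^ 2 + (M * M).trace.re) / ((d : ℝ) * (d + 1)) := by
  obtain ⟨U, l, hMU⟩ : ∃ (U : Matrix.unitaryGroup (Fin d) ℂ) (l : Fin d → ℝ),
      M = (U : Matrix (Fin d) (Fin d) ℂ) * diagonal (fun i => (l i : ℂ)) * star (U : Matrix (Fin d) (Fin d) ℂ) := by
    refine ⟨hM.eigenvectorUnitary, hM.eigenvalues, ?_⟩
    have := hM.spectral_theorem
    rw [Unitary.conjStarAlgAut_apply] at this
    exact this
  have hUU : star (U : Matrix (Fin d) (Fin d) ℂ) * (U : Matrix (Fin d) (Fin d) ℂ) = 1 :=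
    Matrix.mem_unitaryGroup_iff'.mp U.2
  have cN : ∀ k, Continuous fun v : Fin d → ℂ => Complex.normSq (v k) := fun k =>
    Complex.continuous_normSq.comp (continuous_apply k)
  have hI : ∀ k l, Integrable (fun v : Fin d → ℂ => Complex.normSq (v k) * Complex.normSq (v l)) μ :=
    fun k l => hs_integrable μ hsupp _ ((cN k).mul (cN l))
  have ht1 : M.trace.re = ∑ i, l i := by
    rw [hMU, Matrix.trace_mul_comm, ← mul_assoc, hUU, one_mul, trace_diagonal]
    simp
  have ht2 : (M * M).trace.re = ∑ i, l i * l i := by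
    have : M * M = (U : Matrix (Fin d) (Fin d) ℂ) * (diagonal (fun i => (l i : ℂ)) *
        diagonal (fun i => (l i : ℂ))) * star (U : Matrix (Fin d) (Fin d) ℂ) := by
      rw [hMU]
      simp only [mul_assoc]
      rw [← mul_assoc (star (U : Matrix (Fin d) (Fin d) ℂ)) (U : Matrix (Fin d) (Fin d) ℂ), hUU,
        one_mul]
    rw [this, Matrix.trace_mul_comm, ← mul_assoc, hUU, one_mul, diagonal_mul_diagonal,
      trace_diagonal]
    simp
  have hq : ∀ v : Fin d → ℂ, (star ((U : Matrix (Fin d) (Fin d) ℂ) *ᵥ v) ⬝ᵥ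
      M *ᵥ ((U : Matrix (Fin d) (Fin d) ℂ) *ᵥ v)).re = ∑ i, l i * Complex.normSq (v i) := by
    intro v
    have e : M *ᵥ ((U : Matrix (Fin d) (Fin d) ℂ) *ᵥ v)
        = (U : Matrix (Fin d) (Fin d) ℂ) *ᵥ (diagonal (fun i => (l i : ℂ)) *ᵥ v) := by
      rw [mulVec_mulVec, mulVec_mulVec, hMU, mul_assoc, hUU, mul_one]
    rw [e, star_mulVec, ← dotProduct_mulVec, mulVec_mulVec, ← star_eq_conjTranspose, hUU,
      one_mulVec]
    simp only [dotProduct, mulVec_diagonal, Complex.re_sum]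
    refine Finset.sum_congr rfl fun k _ => ?_
    simp [Complex.normSq_apply]
    ring
  rw [← hs_invariant μ hinv U (fun v => ((star v ⬝ᵥ M.mulVec v).re) ^ 2)
    (by simp only [dotProduct, mulVec]; fun_prop)]
  simp only [hq, ht1, ht2]
  have hexp : ∀ v : Fin d → ℂ, (∑ i, l i * Complex.normSq (v i)) ^ 2
      = ∑ i, ∑ j, (l i * l j) * (Complex.normSq (v i) * Complex.normSq (v j)) := by
    intro v
    rw [pow_two, Finset.sum_mul_sum]
    refine Finset.sum_congr rfl fun i _ => Finset.sum_congr rfl fun j _ => by ring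
  simp only [hexp]
  rw [integral_finsetSum _ fun i _ => integrable_finsetSum _ fun j _ => (hI i j).const_mul _]
  simp_rw [integral_finsetSum _ fun j _ => (hI _ j).const_mul _, integral_const_mul,
    hs_values hd μ hsupp hinv, mul_div_assoc', ← Finset.sum_div]
  congr 1
  simp [mul_add, Finset.sum_add_distrib, pow_two, Finset.sum_mul_sum]

end
end
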